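/- Let N ≥ 2, a > 0, b > 0, 1* := N/(N-1), E := (1/(N^{N-1} ω_{N-1}))^{1/(N-1)}. Define α_c := sup { ‖u‖_1 / (E - ‖u‖_{1*}^{1*}) : u ∈ BV(ℝ^N), ‖u‖_{TV}^a + ‖u‖_1^b = 1 } and h(t) := (1+t)^{1*/a - 1/b} / ((1+t)^{1*/a} - t^{1*/a}) for t > 0. Then α_c = (1/E) sup_{t>0} h(t). Moreover for u on the constraint set, E - ‖u‖_{1*}^{1*} ≥ E(1 - ‖u‖_{TV}^{1*}) > 0. -/

import Mathlib

open MeasureTheory Real Filter Topology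

noncomputable section

abbrev Euc (N : ℕ) := EuclideanSpace ℝ (Fin N)

/-- The set of values `∫ u div ψ` over admissible test vector fields. -/
def TVSet (N : ℕ) (u : Euc N → ℝ) : Set ℝ :=
  { r | ∃ ψ : Euc N → Euc N, ContDiff ℝ 1 ψ ∧ HasCompactSupport ψ ∧
      (∀ x, ‖ψ x‖ ≤ 1) ∧
      r = ∫ x, u x * (∑ i, fderiv ℝ (fun y => ψ y i) x (EuclideanSpace.single i 1)) }

/-- Total variation of `u`. -/
def tv (N : ℕ) (u : Euc N → ℝ) : ℝ := sSup (TVSet N u)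

/-- `u` is a function of bounded variation on `ℝ^N`. -/
def MemBV (N : ℕ) (u : Euc N → ℝ) : Prop :=
  Integrable u ∧ BddAbove (TVSet N u)

/-- The `L¹` norm. -/
def nrm1 (N : ℕ) (u : Euc N → ℝ) : ℝ := (eLpNorm u 1 volume).toReal

/-- The `L^q` norm, `q` a real exponent. -/
def nrmq (N : ℕ) (q : ℝ) (u : Euc N → ℝ) : ℝ :=
  (eLpNorm u (ENNReal.ofReal q) volume).toReal

/-- Surface area `ω_{N-1}` of the unit sphere in `ℝ^N`, as `N` times the
volume of the unit ball. -/
def omegaS (N : ℕ) : ℝ := N * (volume (Metric.ball (0 : Euc N) 1)).toReal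

/-- The Gagliardo–Nirenberg ratio `‖u‖_q^q / (‖u‖_1^{q-(q-1)N} ‖u‖_{TV}^{(q-1)N})`. -/
def ratioQ (N : ℕ) (q : ℝ) (u : Euc N → ℝ) : ℝ :=
  nrmq N q u ^ q / (nrm1 N u ^ (q - (q-1)*N) * tv N u ^ ((q-1)*(N:ℝ)))

/-- The best constant `E_q` on `BV(ℝ^N)`. -/
def EqSup (N : ℕ) (q : ℝ) : ℝ :=
  sSup { r | ∃ u : Euc N → ℝ, MemBV N u ∧ u ≠ 0 ∧ r = ratioQ N q u }

section Helpers
open scoped ENNReal Pointwise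

lemma bm_compact (K L : Set ℝ) (hK : IsCompact K) (hL : IsCompact L) (hKn : K.Nonempty)
    (hLn : L.Nonempty) : volume K + volume L ≤ volume (K + L) := by
  obtain ⟨M, hM, hMmax⟩ := hK.exists_isGreatest hKn
  obtain ⟨m, hm, hmmin⟩ := hL.exists_isLeast hLn
  have h1 : volume K = volume ((fun x => x + m) '' K) := by
    rw [Set.image_add_right, measure_preimage_add_right]
  have h2 : volume L = volume ((fun x => M + x) '' L) := by
    rw [Set.image_add_left, measure_preimage_add]
  have hLm : MeasurableSet ((fun x => M + x) '' L) :=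
    (hL.image (by fun_prop)).measurableSet
  rw [h1, h2, ← measure_union₀ hLm.nullMeasurableSet]
  · apply measure_mono
    rintro _ (⟨x, hx, rfl⟩ | ⟨x, hx, rfl⟩)
    · exact Set.add_mem_add hx hm
    · exact Set.add_mem_add hM hx
  · refine measure_mono_null (t := {M + m}) ?_ (by simp)
    rintro _ ⟨⟨x, hx, rfl⟩, ⟨y, hy, h⟩⟩
    have := hMmax hx
    have := hmmin hy
    simp only [Set.mem_singleton_iff] at *
    linarith

lemma bm_one (A B : Set ℝ) (hA : MeasurableSet A) (hB : MeasurableSet B) (hAn : A.Nonempty)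
    (hBn : B.Nonempty) : volume A + volume B ≤ volume (A + B) := by
  have key : ∀ K ⊆ A, IsCompact K → ∀ L ⊆ B, IsCompact L →
      volume K + volume L ≤ volume (A + B) := by
    intro K hKA hK L hLB hL
    obtain ⟨x, hx⟩ := hAn
    obtain ⟨y, hy⟩ := hBn
    calc volume K + volume L ≤ volume (insert x K) + volume (insert y L) := by
          gcongr <;> exact Set.subset_insert _ _
      _ ≤ volume (insert x K + insert y L) :=
          bm_compact _ _ (hK.insert x) (hL.insert y) (by simp) (by simp)
      _ ≤ _ := measure_mono (Set.add_subset_add (Set.insert_subset hx hKA)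
          (Set.insert_subset hy hLB))
  refine ENNReal.le_of_forall_pos_le_add ?_ |>.trans le_rfl
  intro ε hε hfin
  have hAf : volume A ≤ volume (A + B) := by
    obtain ⟨y, hy⟩ := hBn
    calc volume A = volume ((fun x => x + y) '' A) := by
          rw [Set.image_add_right, measure_preimage_add_right]
      _ ≤ _ := measure_mono (by rintro _ ⟨x, hx, rfl⟩; exact Set.add_mem_add hx hy)
  have hBf : volume B ≤ volume (A + B) := by
    obtain ⟨y, hy⟩ := hAn
    calc volume B = volume ((fun x => y + x) '' B) := by
          rw [Set.image_add_left, measure_preimage_add]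
      _ ≤ _ := measure_mono (by rintro _ ⟨x, hx, rfl⟩; exact Set.add_mem_add hy hx)
  have hε2 : (ε : ℝ≥0∞) / 2 ≠ 0 := by simp [hε.ne']
  obtain ⟨K, hKA, hK, h1⟩ := hA.exists_isCompact_lt_add (hAf.trans_lt hfin).ne hε2
  obtain ⟨L, hLB, hL, h2⟩ := hB.exists_isCompact_lt_add (hBf.trans_lt hfin).ne hε2
  calc volume A + volume B ≤ (volume K + ε / 2) + (volume L + ε / 2) := add_le_add h1.le h2.le
    _ = (volume K + volume L) + (ε / 2 + ε / 2) := by ring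
    _ ≤ _ := by rw [ENNReal.add_halves]; gcongr; exact key K hKA hK L hLB hL

/-- Prekopa–Leindler property of a measure space. -/
def PLprop (E : Type*) [AddCommGroup E] [Module ℝ E] [MeasureSpace E] : Prop :=
  ∀ l : ℝ, 0 < l → l < 1 → ∀ f g h : E → ℝ≥0∞, Measurable f → Measurable g → Measurable h →
    (∀ x y, f x ^ l * g y ^ (1 - l) ≤ h (l • x + (1 - l) • y)) →
    (∫⁻ x, f x) ^ l * (∫⁻ x, g x) ^ (1 - l) ≤ ∫⁻ x, h x

lemma amgm (l : ℝ) (h0 : 0 < l) (h1 : l < 1) (x y : ℝ≥0∞) :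
    x ^ l * y ^ (1 - l) ≤ ENNReal.ofReal l * x + ENNReal.ofReal (1 - l) * y := by
  have h := ENNReal.young_inequality (x ^ l) (y ^ (1 - l)) (p := l⁻¹) (q := (1 - l)⁻¹)
    ⟨by simp, by positivity, by simp; linarith⟩
  rw [← ENNReal.rpow_mul, ← ENNReal.rpow_mul, mul_inv_cancel₀ h0.ne',
    mul_inv_cancel₀ (by linarith), ENNReal.rpow_one, ENNReal.rpow_one,
    ENNReal.ofReal_inv_of_pos h0, ENNReal.ofReal_inv_of_pos (by linarith), div_eq_mul_inv,
    div_eq_mul_inv, inv_inv, inv_inv, mul_comm x, mul_comm y] at h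
  exact h

lemma pl_core (l : ℝ) (h0 : 0 < l) (h1 : l < 1) (f g h : ℝ → ℝ) (hf : Measurable f)
    (hg : Measurable g) (hh : Measurable h) (hf0 : ∀ x, 0 ≤ f x) (hg0 : ∀ x, 0 ≤ g x)
    (hh0 : ∀ x, 0 ≤ h x) (hf1 : ∀ x, f x ≤ 1) (hg1 : ∀ x, g x ≤ 1)
    (hfs : ∀ s < 1, ∃ x, s < f x) (hgs : ∀ s < 1, ∃ x, s < g x)
    (H : ∀ s x y, 0 < s → s < 1 → s < f x → s < g y → s < h (l * x + (1 - l) * y)) :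
    ENNReal.ofReal l * (∫⁻ x, ENNReal.ofReal (f x)) +
      ENNReal.ofReal (1 - l) * (∫⁻ x, ENNReal.ofReal (g x)) ≤ ∫⁻ x, ENNReal.ofReal (h x) := by
  have hl' : 0 < 1 - l := by linarith
  rw [lintegral_eq_lintegral_meas_lt volume (.of_forall hf0) hf.aemeasurable,
    lintegral_eq_lintegral_meas_lt volume (.of_forall hg0) hg.aemeasurable,
    lintegral_eq_lintegral_meas_lt volume (.of_forall hh0) hh.aemeasurable]
  have mm : ∀ f : ℝ → ℝ, Measurable fun t => volume {a | t < f a} := by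
    intro f
    refine Antitone.measurable ?_
    intro s t hst
    exact measure_mono fun x (hx : t < f x) => lt_of_le_of_lt hst hx
  rw [← lintegral_const_mul _ (mm f), ← lintegral_const_mul _ (mm g),
    ← lintegral_add_left ((mm f).const_mul _)]
  apply lintegral_mono_ae
  filter_upwards [ae_restrict_mem measurableSet_Ioi] with s (hs : 0 < s)
  by_cases hs1 : s < 1
  · have e1 : ENNReal.ofReal l * volume {a | s < f a} = volume (l • {a | s < f a}) := by
      rw [Measure.addHaar_smul]; simp [abs_of_pos h0]
    have e2 : ENNReal.ofReal (1 - l) * volume {a | s < g a} = volume ((1 - l) • {a | s < g a}) := by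
      rw [Measure.addHaar_smul]; simp [abs_of_pos hl']
    rw [e1, e2]
    refine (bm_one _ _ ?_ ?_ ?_ ?_).trans (measure_mono ?_)
    · exact (measurableSet_lt measurable_const hf).const_smul_of_ne_zero h0.ne'
    · exact (measurableSet_lt measurable_const hg).const_smul_of_ne_zero hl'.ne'
    · exact Set.Nonempty.smul_set (hfs s hs1)
    · exact Set.Nonempty.smul_set (hgs s hs1)
    · rintro _ ⟨_, ⟨x, hx, rfl⟩, _, ⟨y, hy, rfl⟩, rfl⟩
      exact H s x y hs hs1 hx hy
  · have e1 : {a | s < f a} = ∅ := by ext x; simp; linarith [hf1 x]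
    have e2 : {a | s < g a} = ∅ := by ext x; simp; linarith [hg1 x]
    simp [e1, e2]

lemma pl_bdd (l : ℝ) (h0 : 0 < l) (h1 : l < 1) (f g h : ℝ → ℝ≥0∞) (hf : Measurable f)
    (hg : Measurable g) (hh : Measurable h) (hfb : (⨆ x, f x) ≠ ∞) (hgb : (⨆ x, g x) ≠ ∞)
    (H : ∀ x y, f x ^ l * g y ^ (1 - l) ≤ h (l • x + (1 - l) • y)) :
    (∫⁻ x, f x) ^ l * (∫⁻ x, g x) ^ (1 - l) ≤ ∫⁻ x, h x := by
  have hl' : 0 < 1 - l := by linarith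
  by_cases hc : (⨆ x, f x) = 0
  · have : ∀ x, f x = 0 := by simpa using hc
    simp [this, h0]
  by_cases hd : (⨆ x, g x) = 0
  · have : ∀ x, g x = 0 := by simpa using hd
    simp [this, hl']
  set c := ⨆ x, f x with hcdef
  set d := ⨆ x, g x with hddef
  set k := c ^ l * d ^ (1 - l) with hk
  have hcl : c ^ l ≠ 0 := by simp [hc, h0.le, hfb]
  have hdl : d ^ (1 - l) ≠ 0 := by simp [hd, hl'.le, hgb]
  have hcl' : c ^ l ≠ ∞ := by simp [hc, h0.le, hfb]
  have hdl' : d ^ (1 - l) ≠ ∞ := by simp [hd, hl'.le, hgb]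
  have hk0 : k ≠ 0 := mul_ne_zero hcl hdl
  have hkt : k ≠ ∞ := ENNReal.mul_ne_top hcl' hdl'
  have f1 : ∀ x, f x / c ≤ 1 := fun x => ENNReal.div_le_of_le_mul (by
    rw [one_mul]; exact le_iSup f x)
  have g1 : ∀ x, g x / d ≤ 1 := fun x => ENNReal.div_le_of_le_mul (by
    rw [one_mul]; exact le_iSup g x)
  have ft : ∀ x, f x / c ≠ ∞ := fun x => ((f1 x).trans_lt ENNReal.one_lt_top).ne
  have gt : ∀ x, g x / d ≠ ∞ := fun x => ((g1 x).trans_lt ENNReal.one_lt_top).ne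
  have ht : ∀ x, min 1 (h x / k) ≠ ∞ := fun x =>
    ((min_le_left _ _).trans_lt ENNReal.one_lt_top).ne
  have lt_iff : ∀ (s : ℝ) (hs : 0 ≤ s) (a : ℝ≥0∞) (ha : a ≠ ∞),
      s < a.toReal ↔ ENNReal.ofReal s < a := by
    intro s hs a ha
    rw [ENNReal.ofReal_lt_iff_lt_toReal hs ha]
  have ex : ∀ (F : ℝ → ℝ≥0∞) (C : ℝ≥0∞), C = (⨆ x, F x) → C ≠ 0 → C ≠ ∞ →
      (∀ x, F x / C ≠ ∞) → ∀ s < (1 : ℝ), ∃ x, s < (F x / C).toReal := by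
    intro F C hC hC0 hCt hF s hs
    have hs' : max s 0 < 1 := max_lt hs one_pos
    have : ENNReal.ofReal (max s 0) * C < ⨆ x, F x := by
      rw [← hC]
      calc _ < 1 * C := by
            refine (ENNReal.mul_lt_mul_iff_left hC0 hCt).2 ?_
            rw [← ENNReal.ofReal_one]
            exact (ENNReal.ofReal_lt_ofReal_iff one_pos).2 hs'
        _ = C := one_mul _
    obtain ⟨x, hx⟩ := lt_iSup_iff.1 this
    refine ⟨x, lt_of_le_of_lt (le_max_left s 0) ?_⟩
    rw [lt_iff _ (le_max_right _ _) _ (hF x)]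
    exact (ENNReal.lt_div_iff_mul_lt (Or.inl hC0) (Or.inl hCt)).2 hx
  have core := pl_core l h0 h1 (fun x => (f x / c).toReal) (fun x => (g x / d).toReal)
    (fun x => (min 1 (h x / k)).toReal) (by fun_prop) (by fun_prop) (by fun_prop)
    (fun _ => ENNReal.toReal_nonneg) (fun _ => ENNReal.toReal_nonneg)
    (fun _ => ENNReal.toReal_nonneg)
    (fun x => ENNReal.toReal_le_of_le_ofReal zero_le_one (by simpa using f1 x))
    (fun x => ENNReal.toReal_le_of_le_ofReal zero_le_one (by simpa using g1 x))
    (ex f c rfl hc hfb ft) (ex g d rfl hd hgb gt) ?_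
  · simp only [ENNReal.ofReal_toReal (ft _), ENNReal.ofReal_toReal (gt _),
      ENNReal.ofReal_toReal (ht _)] at core
    have core2 := (amgm l h0 h1 _ _).trans core
    have core3 : (∫⁻ x, min 1 (h x / k)) ≤ (∫⁻ x, h x) / k := by
      calc _ ≤ ∫⁻ x, h x / k := lintegral_mono fun x => min_le_right _ _
        _ = _ := by simp only [div_eq_mul_inv]; rw [lintegral_mul_const _ hh]
    have core4 := core2.trans core3
    simp only [div_eq_mul_inv] at core4
    rw [lintegral_mul_const _ hf, lintegral_mul_const _ hg, ENNReal.mul_rpow_of_nonneg _ _ h0.le,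
      ENNReal.mul_rpow_of_nonneg _ _ hl'.le, ENNReal.inv_rpow, ENNReal.inv_rpow] at core4
    have e : (∫⁻ x, f x) ^ l * (c ^ l)⁻¹ * ((∫⁻ x, g x) ^ (1 - l) * (d ^ (1 - l))⁻¹) =
        ((∫⁻ x, f x) ^ l * (∫⁻ x, g x) ^ (1 - l)) * k⁻¹ := by
      rw [hk, ENNReal.mul_inv (Or.inl hcl) (Or.inl hcl')]; ring
    rw [e] at core4
    exact (ENNReal.mul_le_mul_iff_left (by simpa using hkt) (by simpa using hk0)).1 core4
  · intro s x y hs hs1 hx hy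
    rw [lt_iff _ hs.le _ (ft x)] at hx
    rw [lt_iff _ hs.le _ (gt y)] at hy
    rw [lt_iff _ hs.le _ (ht _)]
    refine lt_min (by rw [← ENNReal.ofReal_one]; exact (ENNReal.ofReal_lt_ofReal_iff one_pos).2 hs1) ?_
    calc ENNReal.ofReal s = ENNReal.ofReal s ^ l * ENNReal.ofReal s ^ (1 - l) := by
          rw [← ENNReal.rpow_add _ _ (by simpa using hs) (by simp)]; simp
      _ < (f x / c) ^ l * (g y / d) ^ (1 - l) :=
          ENNReal.mul_lt_mul (ENNReal.rpow_lt_rpow hx h0) (ENNReal.rpow_lt_rpow hy hl')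
      _ = (f x ^ l * g y ^ (1 - l)) / k := by
          rw [ENNReal.div_rpow_of_nonneg _ _ h0.le, ENNReal.div_rpow_of_nonneg _ _ hl'.le, hk,
            div_eq_mul_inv, div_eq_mul_inv, div_eq_mul_inv,
            ENNReal.mul_inv (Or.inl hcl) (Or.inl hcl')]; ring
      _ ≤ _ := by gcongr; exact H x y

lemma pl_one : PLprop ℝ := by
  intro l h0 h1 f g h hf hg hh H
  have hl' : 0 < 1 - l := by linarith
  by_cases hc : (∫⁻ x, f x) = 0
  · simp [hc, h0]
  by_cases hd : (∫⁻ x, g x) = 0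
  · simp [hd, hl']
  have T : ∀ F : ℝ → ℝ≥0∞, Measurable F →
      Tendsto (fun n : ℕ => ∫⁻ x, min (F x) n) atTop (𝓝 (∫⁻ x, F x)) := by
    intro F hF
    refine lintegral_tendsto_of_tendsto_of_monotone (fun n => by fun_prop) ?_ ?_
    · refine .of_forall fun x n m hnm => ?_
      dsimp only
      gcongr
    · refine .of_forall fun x => ?_
      have := (tendsto_const_nhds (x := F x)).min ENNReal.tendsto_nat_nhds_top
      simpa using this
  have Tf := ((ENNReal.continuous_rpow_const (y := l)).tendsto _).comp (T f hf)
  have Tg := ((ENNReal.continuous_rpow_const (y := 1 - l)).tendsto _).comp (T g hg)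
  have TT := ENNReal.Tendsto.mul Tf (Or.inl (by simp [hc, h0, h0.le])) Tg
    (Or.inl (by simp [hd, hl', h1.le]))
  refine le_of_tendsto' TT fun n => ?_
  refine pl_bdd l h0 h1 _ _ h (by fun_prop) (by fun_prop) hh ?_ ?_ ?_
  · exact ((iSup_le fun x => min_le_right _ _).trans_lt (ENNReal.natCast_lt_top n)).ne
  · exact ((iSup_le fun x => min_le_right _ _).trans_lt (ENNReal.natCast_lt_top n)).ne
  · intro x y
    refine le_trans ?_ (H x y)
    gcongr <;> exact min_le_left _ _

lemma pl_prod (E F : Type*) [AddCommGroup E] [Module ℝ E] [MeasureSpace E]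
    [AddCommGroup F] [Module ℝ F] [MeasureSpace F] [SFinite (volume : Measure E)]
    [SFinite (volume : Measure F)]
    (hE : PLprop E) (hF : PLprop F) : PLprop (E × F) := by
  intro l h0 h1 f g h hf hg hh H
  rw [Measure.volume_eq_prod, lintegral_prod _ hf.aemeasurable, lintegral_prod _ hg.aemeasurable,
    lintegral_prod _ hh.aemeasurable]
  refine hE l h0 h1 _ _ _ hf.lintegral_prod_right' hg.lintegral_prod_right'
    hh.lintegral_prod_right' ?_
  intro x x'
  refine hF l h0 h1 _ _ _ (by fun_prop) (by fun_prop) (by fun_prop) ?_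
  intro y y'
  exact H (x, y) (x', y')

lemma pl_transfer (E F : Type*) [AddCommGroup E] [Module ℝ E] [MeasureSpace E]
    [AddCommGroup F] [Module ℝ F] [MeasureSpace F] (e : F → E) (he : MeasurePreserving e)
    (e' : E → F) (he' : Measurable e') (hl : ∀ x, e (e' x) = x) (hr : ∀ x, e' (e x) = x)
    (hlin : ∀ (l m : ℝ) x y, e (l • x + m • y) = l • e x + m • e y)
    (hE : PLprop E) : PLprop F := by
  intro l h0 h1 f g h hf hg hh H
  have T : ∀ k : F → ℝ≥0∞, Measurable k → ∫⁻ x, k x = ∫⁻ x, k (e' x) := by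
    intro k hk
    rw [← he.map_eq, lintegral_map (by fun_prop) he.measurable]
    simp [hr]
  rw [T f hf, T g hg, T h hh]
  refine hE l h0 h1 _ _ _ (by fun_prop) (by fun_prop) (by fun_prop) ?_
  intro x y
  have : e' (l • x + (1 - l) • y) = l • e' x + (1 - l) • e' y := by
    rw [← hr (l • e' x + (1 - l) • e' y), hlin, hl, hl]
  rw [this]
  exact H _ _

lemma pl_pi (n : ℕ) : PLprop (Fin n → ℝ) := by
  induction n with
  | zero =>
    intro l h0 h1 f g h hf hg hh H
    have : ∀ k : (Fin 0 → ℝ) → ℝ≥0∞, ∫⁻ x, k x = k 0 := by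
      intro k
      rw [volume_pi, Measure.pi_of_empty _ 0, lintegral_dirac]
    rw [this, this, this]
    have := H 0 0
    simpa using this
  | succ n ih =>
    refine pl_transfer (ℝ × (Fin n → ℝ)) (Fin (n + 1) → ℝ)
      (MeasurableEquiv.piFinSuccAbove (fun _ => ℝ) 0)
      (volume_preserving_piFinSuccAbove (fun _ => ℝ) 0)
      (MeasurableEquiv.piFinSuccAbove (fun _ => ℝ) 0).symm
      (MeasurableEquiv.measurable _) (MeasurableEquiv.apply_symm_apply _)
      (MeasurableEquiv.symm_apply_apply _) ?_ (pl_prod _ _ pl_one ih)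
    intro l m x y
    ext <;> simp [MeasurableEquiv.piFinSuccAbove, Fin.tail]

lemma pl_euc (n : ℕ) : PLprop (EuclideanSpace ℝ (Fin n)) := by
  refine pl_transfer (Fin n → ℝ) _ _ (PiLp.volume_preserving_ofLp (Fin n)) (WithLp.toLp 2)
    (PiLp.volume_preserving_toLp (Fin n)).measurable (by simp) (by simp) (by simp) (pl_pi n)

lemma bm_euc_geom (n : ℕ) (l : ℝ) (h0 : 0 < l) (h1 : l < 1)
    (A B : Set (EuclideanSpace ℝ (Fin n))) (hA : IsOpen A) (hB : IsOpen B) :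
    volume A ^ l * volume B ^ (1 - l) ≤ volume (l • A + (1 - l) • B) := by
  have hl' : 0 < 1 - l := by linarith
  have hAB : IsOpen (l • A + (1 - l) • B) := (hB.smul₀ hl'.ne').add_left
  have := pl_euc n l h0 h1 (A.indicator 1) (B.indicator 1) ((l • A + (1 - l) • B).indicator 1)
    (measurable_one.indicator hA.measurableSet) (measurable_one.indicator hB.measurableSet)
    (measurable_one.indicator hAB.measurableSet) ?_
  · rwa [lintegral_indicator_one hA.measurableSet, lintegral_indicator_one hB.measurableSet,
      lintegral_indicator_one hAB.measurableSet] at this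
  · intro x y
    by_cases hx : x ∈ A
    · by_cases hy : y ∈ B
      · rw [Set.indicator_of_mem (Set.add_mem_add (Set.smul_mem_smul_set hx)
          (Set.smul_mem_smul_set hy))]
        simp [hx, hy]
      · simp [hy, hl']
    · simp [hx, h0]

/-- Brunn–Minkowski for an open set of finite measure and a ball -/
lemma bm_ball (n : ℕ) (hn : 0 < n) (A : Set (EuclideanSpace ℝ (Fin n))) (hA : IsOpen A)
    (α κ ε : ℝ) (hα : 0 < α) (hκ : 0 < κ) (hε : 0 < ε) (hvA : volume A = ENNReal.ofReal (α ^ n))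
    (hvB : volume (Metric.ball (0 : EuclideanSpace ℝ (Fin n)) 1) = ENNReal.ofReal (κ ^ n)) :
    ENNReal.ofReal ((α + ε * κ) ^ n) ≤ volume (A + Metric.ball 0 ε) := by
  set β := ε * κ with hβ
  have hβ0 : 0 < β := by positivity
  have hB : volume (Metric.ball (0 : EuclideanSpace ℝ (Fin n)) ε) = ENNReal.ofReal (β ^ n) := by
    rw [Measure.addHaar_ball_of_pos _ _ hε, hvB, ← ENNReal.ofReal_mul (by positivity)]
    simp [hβ, mul_pow]
  have hs : 0 < α + β := by positivity
  have hl1 : 1 - α / (α + β) = β / (α + β) := by field_simp; ring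
  have key := bm_euc_geom n (α / (α + β)) (by positivity)
    (by rw [div_lt_one hs]; linarith) (α⁻¹ • A) (β⁻¹ • Metric.ball 0 ε)
    (hA.smul₀ (by positivity)) (Metric.isOpen_ball.smul₀ (by positivity))
  have e1 : volume (α⁻¹ • A) = 1 := by
    rw [Measure.addHaar_smul, hvA, ← ENNReal.ofReal_mul (by positivity)]
    simp [abs_of_pos hα]
    field_simp
  have e2 : volume (β⁻¹ • Metric.ball (0 : EuclideanSpace ℝ (Fin n)) ε) = 1 := by
    rw [Measure.addHaar_smul, hB, ← ENNReal.ofReal_mul (by positivity)]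
    simp [abs_of_pos hβ0]
    field_simp
  rw [e1, e2, hl1, smul_smul, smul_smul] at key
  have e3 : α / (α + β) * α⁻¹ = (α + β)⁻¹ := by field_simp
  have e4 : β / (α + β) * β⁻¹ = (α + β)⁻¹ := by field_simp
  rw [e3, e4, ← smul_add, Measure.addHaar_smul] at key
  simp only [ENNReal.one_rpow, mul_one, finrank_euclideanSpace, Fintype.card_fin] at key
  calc ENNReal.ofReal ((α + β) ^ n) = ENNReal.ofReal ((α + β) ^ n) * 1 := by simp
    _ ≤ ENNReal.ofReal ((α + β) ^ n) * (ENNReal.ofReal |(α + β)⁻¹ ^ n| * volume (A + Metric.ball 0 ε)) := by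
        gcongr
    _ = volume (A + Metric.ball 0 ε) := by
        rw [← mul_assoc, ← ENNReal.ofReal_mul (by positivity), abs_of_pos (by positivity), inv_pow,
          mul_inv_cancel₀ (by positivity)]; simp

/-- linearized form -/
lemma bm_lin (n : ℕ) (hn : 2 ≤ n) (A : Set (EuclideanSpace ℝ (Fin n))) (hA : IsOpen A)
    (hAf : volume A ≠ ∞)
    (κ ε : ℝ) (hκ : 0 < κ) (hε : 0 < ε)
    (hvB : volume (Metric.ball (0 : EuclideanSpace ℝ (Fin n)) 1) = ENNReal.ofReal (κ ^ n)) :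
    volume A + ENNReal.ofReal (n * ε * κ) * volume A ^ (((n : ℝ) - 1) / n)
      ≤ volume (A + Metric.ball 0 ε) := by
  have hn' : (2 : ℝ) ≤ n := by exact_mod_cast hn
  have hexp : 0 < ((n : ℝ) - 1) / n := by apply div_pos <;> linarith
  by_cases h0 : volume A = 0
  · simp [h0, hexp]
  set v := (volume A).toReal with hv
  have hv0 : 0 < v := ENNReal.toReal_pos h0 hAf
  have hvA : volume A = ENNReal.ofReal v := (ENNReal.ofReal_toReal hAf).symm
  set α := v ^ ((1 : ℝ) / n) with hαd
  have hα : 0 < α := by positivity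
  have hαn : α ^ n = v := by
    rw [hαd, ← Real.rpow_natCast, ← Real.rpow_mul hv0.le]
    rw [one_div, inv_mul_cancel₀ (by linarith), Real.rpow_one]
  have hαn1 : v ^ (((n : ℝ) - 1) / n) = α ^ (n - 1) := by
    rw [hαd, ← Real.rpow_natCast, ← Real.rpow_mul hv0.le, Nat.cast_sub (by lia)]
    congr 1
    push_cast
    ring
  refine le_trans ?_ (bm_ball n (by lia) A hA α κ ε hα hκ hε (by rw [hαn, hvA]) hvB)
  rw [hvA, ENNReal.ofReal_rpow_of_pos hv0, ← ENNReal.ofReal_mul (by positivity),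
    ← ENNReal.ofReal_add hv0.le (by positivity)]
  apply ENNReal.ofReal_le_ofReal
  rw [hαn1]
  have hb := one_add_mul_le_pow (a := ε * κ / α) (by have : 0 < ε * κ / α := by positivity
                                                     linarith) n
  have e1 : (α + ε * κ) ^ n = α ^ n * (1 + ε * κ / α) ^ n := by
    rw [← mul_pow]; congr 1; field_simp
  have e2 : α ^ n = α ^ (n - 1) * α := by rw [← pow_succ]; congr 1; lia
  rw [e1]
  calc v + n * ε * κ * α ^ (n - 1) = α ^ n * (1 + n * (ε * κ / α)) := by
        rw [mul_add, mul_one, hαn, ← hαn, e2]; field_simp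
    _ ≤ _ := by gcongr


lemma sob_coarea (n : ℕ) (hn : 2 ≤ n) (κ : ℝ) (hκ : 0 < κ)
    (hvB : volume (Metric.ball (0 : EuclideanSpace ℝ (Fin n)) 1) = ENNReal.ofReal (κ ^ n))
    (w : EuclideanSpace ℝ (Fin n) → ℝ) (hw : ContDiff ℝ 1 w) (hc : HasCompactSupport w) :
    ENNReal.ofReal (n * κ) * (∫⁻ s in Set.Ioi (0 : ℝ), volume {x | s < |w x|} ^ (((n : ℝ) - 1) / n))
      ≤ ∫⁻ x, ‖fderiv ℝ w x‖ₑ := by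
  have hwc : Continuous w := hw.continuous
  have hDc : Continuous (fderiv ℝ w) := hw.continuous_fderiv one_ne_zero
  set K := Metric.cthickening 1 (tsupport w) with hK
  have hKc : IsCompact K := hc.isCompact.cthickening
  have hKf : volume K ≠ ∞ := hKc.measure_lt_top.ne
  set I := ∫⁻ s in Set.Ioi (0 : ℝ), volume {x | s < |w x|} ^ (((n : ℝ) - 1) / n) with hI
  have mm : ∀ f : EuclideanSpace ℝ (Fin n) → ℝ, Measurable fun t => volume {a | t < f a} := by
    intro f
    refine Antitone.measurable ?_
    intro s t hst
    exact measure_mono fun x (hx : t < f x) => lt_of_le_of_lt hst hx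
  have main : ∀ η : ℝ, 0 < η → ENNReal.ofReal (n * κ) * I ≤
      (∫⁻ x, ‖fderiv ℝ w x‖ₑ) + ENNReal.ofReal η * volume K := by
    intro η hη
    have huc : UniformContinuous (fderiv ℝ w) :=
      (hc.fderiv (𝕜 := ℝ)).uniformContinuous_of_continuous hDc
    obtain ⟨ε₀, hε₀, hε₀'⟩ := Metric.uniformContinuous_iff.1 huc η hη
    set ε := min ε₀ 1 with hεd
    have hε : 0 < ε := lt_min hε₀ one_pos
    have hmv : ∀ x y, dist y x < ε → |w y - w x| ≤ (‖fderiv ℝ w x‖ + η) * ε := by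
      intro x y hxy
      have := (convex_ball x ε).norm_image_sub_le_of_norm_fderiv_le (𝕜 := ℝ) (f := w)
        (C := ‖fderiv ℝ w x‖ + η)
        (fun z _ => hw.differentiable one_ne_zero z) (fun z hz => ?_)
        (Metric.mem_ball_self hε) (Metric.mem_ball.2 hxy)
      · rw [Real.norm_eq_abs] at this
        refine this.trans ?_
        rw [← dist_eq_norm]
        gcongr
      · have h1 : dist (fderiv ℝ w z) (fderiv ℝ w x) < η :=
          hε₀' (lt_of_lt_of_le (Metric.mem_ball.1 hz) (min_le_left _ _))
        rw [dist_eq_norm] at h1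
        have := norm_sub_norm_le (fderiv ℝ w z) (fderiv ℝ w x)
        linarith
    set p : EuclideanSpace ℝ (Fin n) → ℝ := K.indicator (fun x => (‖fderiv ℝ w x‖ + η) * ε) with hp
    have hp0 : ∀ x, 0 ≤ p x := fun x => Set.indicator_nonneg (fun _ _ => by positivity) x
    have hpm : Measurable p := by
      refine Measurable.indicator ?_ hKc.measurableSet
      exact ((hDc.norm.add continuous_const).mul continuous_const).measurable
    have hsub : ∀ s : ℝ, 0 < s → {x | s < |w x|} + Metric.ball 0 ε ⊆ {x | s < |w x| + p x} := by
      rintro s hs _ ⟨y, hy, z, hz, rfl⟩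
      have hz' : ‖z‖ < ε := by simpa using hz
      have hd : dist y (y + z) < ε := by simpa using hz'
      have hyK : y + z ∈ K := by
        refine Metric.mem_cthickening_of_dist_le (y + z) y 1 _ ?_ ?_
        · apply subset_tsupport
          intro h0
          simp only [Set.mem_ofPred_eq, h0, abs_zero] at hy
          linarith
        · rw [dist_comm]; exact hd.le.trans (min_le_right _ _)
      have h1 := hmv (y + z) y hd
      have hpe : p (y + z) = (‖fderiv ℝ w (y + z)‖ + η) * ε := Set.indicator_of_mem hyK _
      simp only [Set.mem_ofPred_eq] at hy ⊢
      rw [hpe]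
      have := abs_sub_abs_le_abs_sub (w y) (w (y + z))
      linarith
    have hwi : Integrable w := hwc.integrable_of_hasCompactSupport hc
    have hwf : (∫⁻ x, ENNReal.ofReal |w x|) ≠ ∞ := by
      have := hwi.hasFiniteIntegral
      rw [hasFiniteIntegral_iff_norm] at this
      exact this.ne
    have upper : (∫⁻ x, ENNReal.ofReal (|w x| + p x)) ≤ (∫⁻ x, ENNReal.ofReal |w x|) +
        ENNReal.ofReal ε * ((∫⁻ x, ‖fderiv ℝ w x‖ₑ) + ENNReal.ofReal η * volume K) := by
      simp_rw [fun x => ENNReal.ofReal_add (abs_nonneg (w x)) (hp0 x)]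
      rw [lintegral_add_left (by fun_prop)]
      gcongr
      calc ∫⁻ x, ENNReal.ofReal (p x) ≤ ∫⁻ x, ENNReal.ofReal ε * (‖fderiv ℝ w x‖ₑ +
              K.indicator (fun _ => ENNReal.ofReal η) x) := by
            apply lintegral_mono
            intro x
            by_cases hx : x ∈ K
            · simp only [hp, Set.indicator_of_mem hx]
              rw [mul_comm, ENNReal.ofReal_mul hε.le, ENNReal.ofReal_add (norm_nonneg _) hη.le,
                ofReal_norm]
            · simp [hp, hx]
        _ = _ := by
            rw [lintegral_const_mul, lintegral_add_left hDc.enorm.measurable,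
              lintegral_indicator_const hKc.measurableSet]
            exact hDc.enorm.measurable.add (measurable_const.indicator hKc.measurableSet)
    have lower : (∫⁻ x, ENNReal.ofReal |w x|) + ENNReal.ofReal ε * (ENNReal.ofReal (n * κ) * I) ≤
        ∫⁻ x, ENNReal.ofReal (|w x| + p x) := by
      rw [lintegral_eq_lintegral_meas_lt volume (.of_forall fun x => abs_nonneg (w x))
        (by fun_prop), lintegral_eq_lintegral_meas_lt volume
        (.of_forall fun x => add_nonneg (abs_nonneg (w x)) (hp0 x)) (by fun_prop)]
      rw [hI, ← mul_assoc, ← lintegral_const_mul _ ((mm _).pow_const _),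
        ← lintegral_add_left (mm _)]
      apply lintegral_mono_ae
      filter_upwards [ae_restrict_mem measurableSet_Ioi] with s (hs : 0 < s)
      refine le_trans ?_ (measure_mono (hsub s hs))
      have hop : IsOpen {x | s < |w x|} := isOpen_lt continuous_const hwc.abs
      have hfin : volume {x | s < |w x|} ≠ ∞ := by
        refine ((measure_mono ?_).trans_lt hc.isCompact.measure_lt_top).ne
        intro x hx
        apply subset_tsupport
        intro h0
        simp only [Set.mem_ofPred_eq, h0, abs_zero] at hx
        linarith
      have := bm_lin n hn _ hop hfin κ ε hκ hε hvB
      rw [← ENNReal.ofReal_mul hε.le]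
      have e5 : (n : ℝ) * ε * κ = ε * (n * κ) := by ring
      rw [e5] at this
      exact this
    have h2 := lower.trans upper
    rw [ENNReal.add_le_add_iff_left hwf] at h2
    exact (ENNReal.mul_le_mul_iff_right (by simpa using hε) (by simp)).1 h2
  refine ENNReal.le_of_forall_pos_le_add ?_
  intro δ hδ _
  have hδ' : (0 : ℝ) < δ := hδ
  have hk0 : 0 ≤ (volume K).toReal := ENNReal.toReal_nonneg
  refine (main (δ / ((volume K).toReal + 1)) (by positivity)).trans ?_
  gcongr
  rw [← ENNReal.ofReal_toReal hKf, ← ENNReal.ofReal_mul (by positivity),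
    ← ENNReal.ofReal_coe_nnreal]
  apply ENNReal.ofReal_le_ofReal
  rw [ENNReal.toReal_ofReal hk0, div_mul_eq_mul_div, div_le_iff₀ (by positivity)]
  nlinarith

lemma layer_holder (n : ℕ) (hn : 2 ≤ n)
    (w : EuclideanSpace ℝ (Fin n) → ℝ) (hw : Continuous w) (hc : HasCompactSupport w) :
    eLpNorm w (ENNReal.ofReal ((n : ℝ) / (n - 1))) volume ≤
    (∫⁻ s in Set.Ioi (0 : ℝ), volume {x | s < |w x|} ^ (((n : ℝ) - 1) / n)) := by
  have hn' : (2 : ℝ) ≤ n := by exact_mod_cast hn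
  set q := (n : ℝ) / (n - 1) with hq
  have hn1 : (0 : ℝ) < n - 1 := by linarith
  have hq0 : 0 < q := by positivity
  have hq1 : q - 1 = 1 / (n - 1) := by rw [hq]; field_simp; ring
  have hqinv : 1 / q = ((n : ℝ) - 1) / n := by rw [hq]; field_simp
  set V : EuclideanSpace ℝ (Fin n) → ℝ≥0∞ := fun x => ENNReal.ofReal |w x| with hV
  have hVm : Measurable V := by fun_prop
  have hVt : ∀ x, V x ≠ ∞ := fun x => ENNReal.ofReal_ne_top
  set J := ∫⁻ x, V x ^ q with hJ
  have e : eLpNorm w (ENNReal.ofReal q) volume = J ^ (1 / q) := by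
    rw [eLpNorm_eq_lintegral_rpow_enorm_toReal (by simpa using hq0) (by simp),
      ENNReal.toReal_ofReal hq0.le]
    simp only [hJ, hV]
    simp_rw [← Real.norm_eq_abs, ofReal_norm]
  have hJf : J ≠ ∞ := by
    have : MemLp w (ENNReal.ofReal q) volume := hw.memLp_of_hasCompactSupport hc
    have h2 := this.eLpNorm_lt_top
    rw [e] at h2
    intro h3
    rw [h3, ENNReal.top_rpow_of_pos (by positivity)] at h2
    exact lt_irrefl _ h2
  rw [e]
  set I := ∫⁻ s in Set.Ioi (0 : ℝ), volume {x | s < |w x|} ^ (((n : ℝ) - 1) / n) with hI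
  by_cases hJ0 : J = 0
  · rw [hJ0, ENNReal.zero_rpow_of_pos (by positivity)]; exact zero_le
  have key : J ≤ I * J ^ (1 / (n : ℝ)) := by
    have e1 : J = ∫⁻ x, ENNReal.ofReal |w x| ∂(volume.withDensity fun x => V x ^ (q - 1)) := by
      rw [lintegral_withDensity_eq_lintegral_mul _ (by fun_prop) (by fun_prop)]
      refine lintegral_congr fun x => ?_
      simp only [Pi.mul_apply]
      change V x ^ q = V x ^ (q - 1) * V x
      by_cases h0 : V x = 0
      · simp [h0, hq0]
      · conv_rhs => rw [← ENNReal.rpow_one (V x), ← ENNReal.rpow_mul, one_mul,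
          ← ENNReal.rpow_add _ _ h0 (hVt x)]
        simp
    calc J = _ := e1
      _ = ∫⁻ s in Set.Ioi (0 : ℝ), (volume.withDensity fun x => V x ^ (q - 1)) {x | s < |w x|} :=
          lintegral_eq_lintegral_meas_lt _ (.of_forall fun x => abs_nonneg _) (by fun_prop)
      _ ≤ ∫⁻ s in Set.Ioi (0 : ℝ), volume {x | s < |w x|} ^ (((n : ℝ) - 1) / n) *
            J ^ (1 / (n : ℝ)) := by
          apply lintegral_mono
          intro s
          have hop : IsOpen {x | s < |w x|} := isOpen_lt continuous_const hw.abs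
          dsimp only
          rw [withDensity_apply _ hop.measurableSet, ← lintegral_indicator hop.measurableSet]
          have hconj : q.HolderConjugate n := by
            refine ⟨?_, hq0, by linarith⟩
            rw [hq, inv_div, inv_one]; field_simp; ring
          have := ENNReal.lintegral_mul_le_Lp_mul_Lq volume hconj
            (f := {x | s < |w x|}.indicator 1) (g := fun x => V x ^ (q - 1))
            (measurable_one.indicator hop.measurableSet).aemeasurable (by fun_prop)
          calc _ = ∫⁻ x, (({x | s < |w x|}.indicator
                (1 : EuclideanSpace ℝ (Fin n) → ℝ≥0∞)) * fun x => V x ^ (q - 1)) x := by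
                refine lintegral_congr fun x => ?_
                by_cases hx : x ∈ {x | s < |w x|} <;> simp only [Pi.mul_apply, hx,
                  Set.indicator_of_mem, Set.indicator_of_notMem, not_false_eq_true] <;> simp
            _ ≤ _ := this
            _ = _ := by
                congr 1
                · rw [hqinv]
                  congr 1
                  rw [← lintegral_indicator_one hop.measurableSet]
                  refine lintegral_congr fun x => ?_
                  by_cases hx : x ∈ {x | s < |w x|}
                  · simp only [Set.indicator_of_mem hx, Pi.one_apply, ENNReal.one_rpow]
                  · simp only [Set.indicator_of_notMem hx, ENNReal.zero_rpow_of_pos hq0]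
                · congr 1
                  refine lintegral_congr fun x => ?_
                  rw [← ENNReal.rpow_mul]
                  congr 1
                  rw [hq1, hq]; field_simp
      _ = _ := by
          rw [lintegral_mul_const]
          refine Measurable.pow_const (Antitone.measurable ?_) _
          intro s t hst
          exact measure_mono fun x (hx : t < |w x|) => lt_of_le_of_lt hst hx
  have hJn0 : J ^ (1 / (n : ℝ)) ≠ 0 := by simp [hJ0, hJf]
  have hJnt : J ^ (1 / (n : ℝ)) ≠ ∞ := by simp [hJ0, hJf]
  have : J ^ (1 / q) * J ^ (1 / (n : ℝ)) ≤ I * J ^ (1 / (n : ℝ)) := by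
    refine le_trans (le_of_eq ?_) key
    rw [← ENNReal.rpow_add _ _ hJ0 hJf, hqinv]
    have : ((n : ℝ) - 1) / n + 1 / n = 1 := by field_simp; ring
    rw [this, ENNReal.rpow_one]
  exact (ENNReal.mul_le_mul_iff_left hJn0 hJnt).1 this

lemma sob_smooth (n : ℕ) (hn : 2 ≤ n) (κ : ℝ) (hκ : 0 < κ)
    (hvB : volume (Metric.ball (0 : EuclideanSpace ℝ (Fin n)) 1) = ENNReal.ofReal (κ ^ n))
    (w : EuclideanSpace ℝ (Fin n) → ℝ) (hw : ContDiff ℝ 1 w) (hc : HasCompactSupport w) :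
    ENNReal.ofReal (n * κ) * eLpNorm w (ENNReal.ofReal ((n : ℝ) / (n - 1))) volume
      ≤ ∫⁻ x, ‖fderiv ℝ w x‖ₑ :=
  le_trans (by gcongr; exact layer_holder n hn w hw.continuous hc)
    (sob_coarea n hn κ hκ hvB w hw hc)



def dv (N : ℕ) (ψ : Euc N → Euc N) (x : Euc N) : ℝ :=
  ∑ i, fderiv ℝ (fun y => ψ y i) x (EuclideanSpace.single i 1)

lemma euc_sum (N : ℕ) (v : Euc N) : v = ∑ i, v i • EuclideanSpace.single i (1 : ℝ) := by
  ext j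
  simp [Finset.sum_apply, Pi.single_apply]

lemma clm_sum (N : ℕ) (L : Euc N →L[ℝ] ℝ) (v : Euc N) :
    L v = ∑ i, L (EuclideanSpace.single i 1) * v i := by
  conv_lhs => rw [euc_sum N v]
  simp [mul_comm]

lemma comp_contDiff {N : ℕ} {ψ : Euc N → Euc N} (hψ : ContDiff ℝ 1 ψ) (i : Fin N) :
    ContDiff ℝ 1 (fun y => ψ y i) := by
  exact (contDiff_euclidean.1 hψ) i

lemma comp_cs {N : ℕ} {ψ : Euc N → Euc N} (hψ : HasCompactSupport ψ) (i : Fin N) :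
    HasCompactSupport (fun y => ψ y i) :=
  hψ.comp_left (g := fun v : Euc N => v i) (by simp)

lemma dv_cont {N : ℕ} {ψ : Euc N → Euc N} (hψ : ContDiff ℝ 1 ψ) : Continuous (dv N ψ) := by
  unfold dv
  refine continuous_finsetSum _ fun i _ => ?_
  exact ((comp_contDiff hψ i).continuous_fderiv one_ne_zero).clm_apply continuous_const

lemma dv_cs {N : ℕ} {ψ : Euc N → Euc N} (hc : HasCompactSupport ψ) :
    HasCompactSupport (dv N ψ) := by
  refine HasCompactSupport.intro hc.isCompact fun x hx => ?_
  unfold dv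
  refine Finset.sum_eq_zero fun i _ => ?_
  have h1 : x ∉ tsupport (fun y => ψ y i) := by
    intro h
    exact hx (tsupport_comp_subset (g := fun v : Euc N => v i) (by simp) ψ h)
  have : fderiv ℝ (fun y => ψ y i) x = 0 := by
    by_contra h
    exact h1 (support_fderiv_subset ℝ h)
  simp [this]

lemma dv_bdd {N : ℕ} {ψ : Euc N → Euc N} (hψ : ContDiff ℝ 1 ψ) (hc : HasCompactSupport ψ) :
    ∃ C, ∀ x, ‖dv N ψ x‖ ≤ C :=
  (dv_cs hc).exists_bound_of_continuous (dv_cont hψ)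

/-- integration by parts -/
lemma ibp {N : ℕ} {C : NNReal} {φ : Euc N → ℝ} (hφ : LipschitzWith C φ) {ψ : Euc N → Euc N}
    (hψ : ContDiff ℝ 1 ψ) (hc : HasCompactSupport ψ) :
    ∫ x, φ x * dv N ψ x = - ∫ x, fderiv ℝ φ x (ψ x) := by
  have hae : (fun x => fderiv ℝ φ x (ψ x)) =ᵐ[volume]
      fun x => ∑ i, lineDeriv ℝ φ x (EuclideanSpace.single i 1) * ψ x i := by
    filter_upwards [hφ.ae_differentiableAt] with x hx
    rw [clm_sum]
    refine Finset.sum_congr rfl fun i _ => ?_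
    rw [hx.lineDeriv_eq_fderiv]
  have hD : ∀ i, ∃ D, LipschitzWith D (fun y => ψ y i) := fun i =>
    (comp_contDiff hψ i).lipschitzWith_of_hasCompactSupport (comp_cs hc i) one_ne_zero
  rw [integral_congr_ae hae]
  have hL : ∀ i, Integrable fun x => lineDeriv ℝ φ x (EuclideanSpace.single i 1) * ψ x i := by
    intro i
    have h1 : Integrable (fun x => ψ x i) :=
      (comp_contDiff hψ i).continuous.integrable_of_hasCompactSupport (comp_cs hc i)
    refine h1.bdd_mul (c := C * ‖(EuclideanSpace.single i (1 : ℝ) : Euc N)‖)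
      (measurable_lineDeriv hφ.continuous).aestronglyMeasurable (.of_forall fun x => ?_)
    exact norm_lineDeriv_le_of_lipschitz ℝ hφ
  have hR : ∀ i, Integrable fun x => φ x * fderiv ℝ (fun y => ψ y i) x
      (EuclideanSpace.single i 1) := by
    intro i
    refine Continuous.integrable_of_hasCompactSupport ?_ ?_
    · exact hφ.continuous.mul
        (((comp_contDiff hψ i).continuous_fderiv one_ne_zero).clm_apply continuous_const)
    · refine HasCompactSupport.mul_left ?_
      exact ((comp_cs hc i).fderiv (𝕜 := ℝ)).comp_left
        (g := fun L : Euc N →L[ℝ] ℝ => L (EuclideanSpace.single i 1)) (by simp)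
  rw [integral_finsetSum _ fun i _ => hL i]
  simp only [dv, Finset.mul_sum]
  rw [integral_finsetSum _ fun i _ => hR i, ← Finset.sum_neg_distrib]
  refine Finset.sum_congr rfl fun i _ => ?_
  obtain ⟨D, hDi⟩ := hD i
  rw [hφ.integral_lineDeriv_mul_eq hDi (comp_cs hc i), ← integral_neg]
  refine integral_congr_ae (.of_forall fun x => ?_)
  have hdiff : DifferentiableAt ℝ (fun y => ψ y i) x :=
    (comp_contDiff hψ i).differentiable one_ne_zero x
  simp only [hdiff.lineDeriv_eq_fderiv]
  simp [mul_comm]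

lemma grad_le_tv {N : ℕ} {w : Euc N → ℝ} (hw : ContDiff ℝ 2 w) (hc : HasCompactSupport w)
    (T : ℝ) (hT : ∀ r ∈ TVSet N w, r ≤ T) : ∫⁻ x, ‖fderiv ℝ w x‖ₑ ≤ ENNReal.ofReal T := by
  set G : Euc N → Euc N := fun x => WithLp.toLp 2 (fun i => fderiv ℝ w x (EuclideanSpace.single i 1))
    with hG
  have hDc : ContDiff ℝ 1 (fderiv ℝ w) := hw.fderiv_right (by norm_num)
  have hGd : ContDiff ℝ 1 G := by
    rw [contDiff_euclidean]
    intro i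
    simp only [hG]
    exact hDc.clm_apply contDiff_const
  have hDw : ∀ x v, fderiv ℝ w x v = inner ℝ (G x) v := by
    intro x v
    rw [clm_sum, PiLp.inner_apply]
    simp [hG, mul_comm]
  have hle : ∀ x, ‖fderiv ℝ w x‖ ≤ ‖G x‖ := by
    intro x
    refine ContinuousLinearMap.opNorm_le_bound _ (norm_nonneg _) fun v => ?_
    rw [hDw]
    exact norm_inner_le_norm _ _
  have hG0 : ∀ x ∉ tsupport w, G x = 0 := by
    intro x hx
    have : fderiv ℝ w x = 0 := by
      by_contra h
      exact hx (support_fderiv_subset ℝ h)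
    ext i
    simp [hG, this]
  obtain ⟨D, hLip⟩ := (hw.of_le one_le_two).lipschitzWith_of_hasCompactSupport hc one_ne_zero
  set K := tsupport w with hK
  have hKc : IsCompact K := hc
  have hKf : volume K ≠ ∞ := hKc.measure_lt_top.ne
  have hDi : Integrable (fun x => ‖fderiv ℝ w x‖) :=
    (hDc.continuous.integrable_of_hasCompactSupport (hc.fderiv (𝕜 := ℝ))).norm
  have main : ∀ δ : ℝ, 0 < δ → (∫ x, ‖fderiv ℝ w x‖) ≤ T + δ * (volume K).toReal := by
    intro δ hδ
    have hpos : ∀ x, 0 < δ ^ 2 + ‖G x‖ ^ 2 := fun x => by positivity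
    set ψ : Euc N → Euc N := fun x => (-(√(δ ^ 2 + ‖G x‖ ^ 2))⁻¹) • G x with hψ
    have hψd : ContDiff ℝ 1 ψ := by
      have hsq : ContDiff ℝ 1 (fun x => (√(δ ^ 2 + ‖G x‖ ^ 2))) :=
        (contDiff_const.add (hGd.norm_sq ℝ)).sqrt fun x => (hpos x).ne'
      exact (hsq.inv fun x => (Real.sqrt_pos.2 (hpos x)).ne').neg.smul hGd
    have hψc : HasCompactSupport ψ := by
      refine HasCompactSupport.intro hKc fun x hx => ?_
      simp [hψ, hG0 x hx]
    have hψ1 : ∀ x, ‖ψ x‖ ≤ 1 := by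
      intro x
      have hs := Real.sqrt_pos.2 (hpos x)
      simp only [hψ, norm_smul, norm_neg, norm_inv, Real.norm_eq_abs, abs_of_pos hs]
      rw [inv_mul_le_iff₀ hs, mul_one]
      apply Real.le_sqrt_of_sq_le
      nlinarith
    have h1 := hT _ ⟨ψ, hψd, hψc, hψ1, rfl⟩
    change ∫ x, w x * dv N ψ x ≤ T at h1
    rw [ibp hLip hψd hψc, ← integral_neg] at h1
    have hi : Integrable (fun x => -(fderiv ℝ w x (ψ x))) := by
      refine Integrable.neg (Continuous.integrable_of_hasCompactSupport ?_ ?_)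
      · exact hDc.continuous.clm_apply hψd.continuous
      · refine HasCompactSupport.intro hKc fun x hx => ?_
        simp [hψ, hG0 x hx]
    have hi2 : Integrable (K.indicator fun _ => δ) :=
      (integrable_indicator_iff hKc.measurableSet).2 (integrableOn_const hKf)
    have h2 : ∫ x, ‖fderiv ℝ w x‖ ≤ ∫ x, (-(fderiv ℝ w x (ψ x)) + K.indicator (fun _ => δ) x) := by
      refine integral_mono hDi (hi.add hi2) fun x => ?_
      dsimp only
      by_cases hx : x ∈ K
      · rw [Set.indicator_of_mem hx]
        refine (hle x).trans ?_
        have hs := Real.sqrt_pos.2 (hpos x)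
        rw [hDw, hψ]
        simp only [inner_smul_right, real_inner_self_eq_norm_sq, neg_mul, neg_neg]
        have h3 : √(δ ^ 2 + ‖G x‖ ^ 2) ≤ δ + ‖G x‖ := by
          rw [Real.sqrt_le_left (by positivity)]
          nlinarith [norm_nonneg (G x)]
        have h4 : √(δ ^ 2 + ‖G x‖ ^ 2) ^ 2 = δ ^ 2 + ‖G x‖ ^ 2 := Real.sq_sqrt (hpos x).le
        rw [← sub_le_iff_le_add, inv_mul_eq_div, le_div_iff₀ hs]
        by_cases h5 : δ ≤ ‖G x‖
        · nlinarith
        · nlinarith [norm_nonneg (G x), sq_nonneg (‖G x‖)]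
      · rw [Set.indicator_of_notMem hx]
        have : ‖fderiv ℝ w x‖ ≤ 0 := by simpa [hG0 x hx] using hle x
        simp [hψ, hG0 x hx]
        simpa using this
    rw [integral_add hi hi2, integral_indicator hKc.measurableSet, setIntegral_const] at h2
    refine h2.trans ?_
    rw [smul_eq_mul, mul_comm δ]
    exact add_le_add h1 le_rfl
  have h0 : 0 ≤ (volume K).toReal := ENNReal.toReal_nonneg
  have fin : (∫ x, ‖fderiv ℝ w x‖) ≤ T := by
    refine le_of_forall_pos_le_add fun η hη => ?_
    refine (main (η / ((volume K).toReal + 1)) (by positivity)).trans ?_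
    gcongr
    rw [div_mul_eq_mul_div, div_le_iff₀ (by positivity)]
    nlinarith
  calc ∫⁻ x, ‖fderiv ℝ w x‖ₑ = ENNReal.ofReal (∫ x, ‖fderiv ℝ w x‖) := by
        rw [ofReal_integral_eq_lintegral_ofReal hDi (.of_forall fun x => norm_nonneg _)]
        simp only [ofReal_norm]
    _ ≤ _ := ENNReal.ofReal_le_ofReal fin

lemma tv_trunc {N : ℕ} {u χ : Euc N → ℝ} (hu : MemBV N u) (hχ : ContDiff ℝ 1 χ)
    (hχ1 : ∀ x, |χ x| ≤ 1) (c : ℝ) (hc : ∀ x, ‖fderiv ℝ χ x‖ ≤ c) :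
    ∀ r ∈ TVSet N (fun x => χ x * u x), r ≤ tv N u + c * ∫ x, |u x| := by
  rintro r ⟨ψ, hψ, hψc, hψ1, rfl⟩
  change ∫ x, χ x * u x * dv N ψ x ≤ _
  have hd : ∀ x, dv N (fun x => χ x • ψ x) x = χ x * dv N ψ x + fderiv ℝ χ x (ψ x) := by
    intro x
    rw [clm_sum]
    simp only [dv, Finset.mul_sum]
    rw [← Finset.sum_add_distrib]
    refine Finset.sum_congr rfl fun i _ => ?_
    have := fderiv_fun_mul (hχ.differentiable one_ne_zero x)
      ((comp_contDiff hψ i).differentiable one_ne_zero x)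
    simp only [PiLp.smul_apply, smul_eq_mul]
    rw [this]
    simp [mul_comm]
  have hmem : ∫ x, u x * dv N (fun x => χ x • ψ x) x ∈ TVSet N u := by
    have hcs : HasCompactSupport (fun x => χ x • ψ x) := by
      refine HasCompactSupport.intro hψc.isCompact fun x hx => ?_
      rw [image_eq_zero_of_notMem_tsupport hx, smul_zero]
    refine ⟨fun x => χ x • ψ x, hχ.smul hψ, hcs, fun x => ?_, rfl⟩
    rw [norm_smul]
    exact mul_le_one₀ (hχ1 x) (norm_nonneg _) (hψ1 x)
  have h1 := le_csSup hu.2 hmem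
  obtain ⟨M, hM⟩ := dv_bdd hψ hψc
  have i1 : Integrable (fun x => u x * (χ x * dv N ψ x)) := by
    refine hu.1.mul_bdd (c := 1 * M) (hχ.continuous.mul (dv_cont hψ)).aestronglyMeasurable
      (.of_forall fun x => ?_)
    rw [norm_mul]
    exact mul_le_mul (hχ1 x) (hM x) (norm_nonneg _) zero_le_one
  have hb : ∀ x, ‖fderiv ℝ χ x (ψ x)‖ ≤ c := fun x => by
    refine (ContinuousLinearMap.le_opNorm _ _).trans ?_
    calc _ ≤ c * 1 := mul_le_mul (hc x) (hψ1 x) (norm_nonneg _) ((norm_nonneg _).trans (hc x))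
      _ = c := mul_one c
  have i2 : Integrable (fun x => u x * (fderiv ℝ χ x (ψ x))) :=
    hu.1.mul_bdd (c := c) ((hχ.continuous_fderiv one_ne_zero).clm_apply
      hψ.continuous).aestronglyMeasurable (.of_forall hb)
  simp only [hd, mul_add] at h1
  rw [integral_add i1 i2] at h1
  have h2 : - (c * ∫ x, |u x|) ≤ ∫ x, u x * (fderiv ℝ χ x (ψ x)) := by
    rw [← integral_const_mul, ← integral_neg]
    refine integral_mono (hu.1.abs.const_mul c).neg i2 fun x => ?_
    have := hb x
    rw [Real.norm_eq_abs] at this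
    have h3 : |u x * (fderiv ℝ χ x (ψ x))| ≤ c * |u x| := by
      rw [abs_mul, mul_comm]; gcongr
    exact (abs_le.1 h3).1
  have h3 : ∫ x, χ x * u x * dv N ψ x = ∫ x, u x * (χ x * dv N ψ x) := by
    congr 1; ext x; ring
  rw [h3]
  change _ ≤ tv N u at h1
  linarith

lemma tv_moll {N : ℕ} {f : Euc N → ℝ} (hf : Integrable f) (T : ℝ) (hT : ∀ r ∈ TVSet N f, r ≤ T)
    (φ : ContDiffBump (0 : Euc N)) :
    ∀ r ∈ TVSet N (convolution (φ.normed volume) f (ContinuousLinearMap.lsmul ℝ ℝ) volume), r ≤ T := by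
  rintro r ⟨ψ, hψ, hψc, hψ1, rfl⟩
  change ∫ x, (convolution (φ.normed volume) f (ContinuousLinearMap.lsmul ℝ ℝ) volume) x *
    dv N ψ x ≤ T
  obtain ⟨M, hM⟩ := dv_bdd hψ hψc
  set ρ := φ.normed (volume : Measure (Euc N)) with hρ
  have hρi : Integrable ρ := φ.integrable_normed
  have hcvi := hρi.convolution_integrand (ContinuousLinearMap.lsmul ℝ ℝ) hf
  have hcvi2 : Integrable (fun p : Euc N × Euc N => ρ p.2 * f (p.1 - p.2) * dv N ψ p.1)
      (volume.prod volume) := by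
    refine Integrable.mul_bdd (c := M) hcvi ?_ (.of_forall fun p => hM p.1)
    exact ((dv_cont hψ).comp continuous_fst).aestronglyMeasurable
  have e1 : ∫ x, (convolution ρ f (ContinuousLinearMap.lsmul ℝ ℝ) volume) x * dv N ψ x =
      ∫ x, ∫ t, ρ t * f (x - t) * dv N ψ x := by
    refine integral_congr_ae (.of_forall fun x => ?_)
    simp only [convolution, ContinuousLinearMap.lsmul_apply, smul_eq_mul]
    rw [integral_mul_const]
  rw [e1, integral_integral_swap hcvi2]
  have e2 : ∀ t, ∫ x, ρ t * f (x - t) * dv N ψ x ≤ ρ t * T := by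
    intro t
    simp_rw [mul_assoc]
    rw [integral_const_mul]
    refine mul_le_mul_of_nonneg_left ?_ (φ.nonneg_normed t)
    refine hT _ ⟨fun x => ψ (x + t), hψ.comp (contDiff_id.add contDiff_const),
      hψc.comp_homeomorph (Homeomorph.addRight t), fun x => hψ1 _, ?_⟩
    rw [← integral_add_right_eq_self _ t]
    refine integral_congr_ae (.of_forall fun x => ?_)
    simp only [add_sub_cancel_right, dv]
    congr 1
    refine Finset.sum_congr rfl fun i _ => ?_
    rw [fderiv_comp_add_right (f := fun y => ψ y i) t]
  calc ∫ t, ∫ x, ρ t * f (x - t) * dv N ψ x ≤ ∫ t, ρ t * T :=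
        integral_mono hcvi2.integral_prod_right (hρi.mul_const T) e2
    _ = T := by rw [integral_mul_const, hρ, φ.integral_normed, one_mul]



lemma sob_bv (n : ℕ) (hn : 2 ≤ n) (κ : ℝ) (hκ : 0 < κ)
    (hvB : volume (Metric.ball (0 : Euc n) 1) = ENNReal.ofReal (κ ^ n))
    (u : Euc n → ℝ) (hu : MemBV n u) :
    ENNReal.ofReal (n * κ) * eLpNorm u (ENNReal.ofReal ((n : ℝ) / (n - 1))) volume
      ≤ ENNReal.ofReal (tv n u) := by
  have hn0 : (0 : ℝ) < n := by exact_mod_cast (by lia : 0 < n)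
  set q := ENNReal.ofReal ((n : ℝ) / (n - 1)) with hq
  set C := ENNReal.ofReal (n * κ) with hC
  have hC0 : C ≠ 0 := by
    have : 0 < n * κ := by positivity
    rw [hC]; exact (ENNReal.ofReal_pos.2 this).ne'
  have hCt : C ≠ ∞ := ENNReal.ofReal_ne_top
  have mv : ∀ a b : ℝ≥0∞, C * a ≤ b ↔ a ≤ C⁻¹ * b := by
    intro a b
    rw [mul_comm, ← ENNReal.le_div_iff_mul_le (Or.inl hC0) (Or.inl hCt), div_eq_mul_inv, mul_comm b]
  -- compactly supported functions
  have step1 : ∀ f : Euc n → ℝ, Integrable f → HasCompactSupport f → ∀ T : ℝ,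
      (∀ r ∈ TVSet n f, r ≤ T) → eLpNorm f q volume ≤ C⁻¹ * ENNReal.ofReal T := by
    intro f hf hfc T hT
    let φ : ℕ → ContDiffBump (0 : Euc n) := fun k =>
      ⟨1 / ((k : ℝ) + 1), 2 * (1 / ((k : ℝ) + 1)), by positivity, by
        have : 0 < 1 / ((k : ℝ) + 1) := by positivity
        linarith⟩
    have hφ0 : Tendsto (fun k => (φ k).rOut) atTop (𝓝 0) := by
      have := (tendsto_one_div_add_atTop_nhds_zero_nat (𝕜 := ℝ)).const_mul 2
      simpa [φ] using this
    have hae := ContDiffBump.ae_convolution_tendsto_right_of_locallyIntegrable (μ := volume) (K := 2)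
      hφ0 (.of_forall fun k => le_rfl) hf.locallyIntegrable
    set W : ℕ → Euc n → ℝ := fun k => convolution ((φ k).normed volume) f
      (ContinuousLinearMap.lsmul ℝ ℝ) volume with hW
    have hWd : ∀ k, ContDiff ℝ 2 (W k) := fun k =>
      HasCompactSupport.contDiff_convolution_left _ (φ k).hasCompactSupport_normed
        (φ k).contDiff_normed hf.locallyIntegrable
    have hWc : ∀ k, HasCompactSupport (W k) := fun k =>
      HasCompactSupport.convolution _ (φ k).hasCompactSupport_normed hfc
    have hb : ∀ k, eLpNorm (W k) q volume ≤ C⁻¹ * ENNReal.ofReal T := by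
      intro k
      rw [← mv]
      exact (sob_smooth n hn κ hκ hvB (W k) ((hWd k).of_le one_le_two) (hWc k)).trans
        (grad_le_tv (hWd k) (hWc k) T (tv_moll hf T hT (φ k)))
    refine (Lp.eLpNorm_lim_le_liminf_eLpNorm
      (fun k => (hWd k).continuous.aestronglyMeasurable) f hae).trans ?_
    refine (liminf_le_liminf (.of_forall hb)).trans ?_
    rw [liminf_const]
  let χ : ContDiffBump (0 : Euc n) := ⟨1, 2, one_pos, one_lt_two⟩
  have hχd : ContDiff ℝ 1 χ := χ.contDiff
  obtain ⟨M, hM⟩ := (χ.hasCompactSupport.fderiv (𝕜 := ℝ)).exists_bound_of_continuous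
    (hχd.continuous_fderiv one_ne_zero)
  set X : ℕ → Euc n → ℝ := fun k x => χ ((1 / ((k : ℝ) + 1)) • x) with hX
  have hk0 : ∀ k : ℕ, 0 < 1 / ((k : ℝ) + 1) := fun k => by positivity
  have hXd : ∀ k, ContDiff ℝ 1 (X k) := fun k =>
    hχd.comp (contDiff_const_smul (1 / ((k : ℝ) + 1)))
  have hXc : ∀ k, HasCompactSupport (X k) := fun k =>
    χ.hasCompactSupport.comp_smul (hk0 k).ne'
  have hXb : ∀ k x, ‖fderiv ℝ (X k) x‖ ≤ M * (1 / ((k : ℝ) + 1)) := by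
    intro k x
    simp only [hX]
    rw [fderiv_comp_smul, norm_smul, Real.norm_eq_abs, abs_of_pos (hk0 k), mul_comm]
    exact mul_le_mul_of_nonneg_right (hM _) (hk0 k).le
  have hX1 : ∀ k x, |X k x| ≤ 1 := fun k x => by
    rw [abs_of_nonneg χ.nonneg]; exact χ.le_one
  set A := ∫ x, |u x| with hA
  have hb : ∀ k, eLpNorm (fun x => X k x * u x) q volume ≤
      C⁻¹ * ENNReal.ofReal (tv n u + M * (1 / ((k : ℝ) + 1)) * A) := by
    intro k
    refine step1 _ ?_ ?_ _ (tv_trunc hu (hXd k) (hX1 k) _ (hXb k))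
    · exact hu.1.bdd_mul (c := 1) (hXd k).continuous.aestronglyMeasurable
        (.of_forall fun x => hX1 k x)
    · exact (hXc k).mul_right
  rw [mv]
  refine (Lp.eLpNorm_lim_le_liminf_eLpNorm (f := fun k x => X k x * u x)
    (fun k => (hXd k).continuous.aestronglyMeasurable.mul hu.1.1) u
    (.of_forall fun x => ?_)).trans ?_
  · have h1 : Tendsto (fun k : ℕ => (1 / ((k : ℝ) + 1)) • x) atTop (𝓝 ((0 : ℝ) • x)) :=
      (tendsto_one_div_add_atTop_nhds_zero_nat (𝕜 := ℝ)).smul_const x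
    have h2 := (χ.continuous.tendsto _).comp h1
    have h3 : χ ((0 : ℝ) • x) = 1 := by
      rw [zero_smul]
      exact χ.one_of_mem_closedBall (by simp [χ])
    rw [h3] at h2
    have := h2.mul_const (u x)
    simpa [hX] using this
  · refine (liminf_le_liminf (.of_forall hb)).trans ?_
    apply le_of_eq
    apply Tendsto.liminf_eq
    refine ENNReal.Tendsto.const_mul ?_ (Or.inr (by simpa using hC0))
    apply ENNReal.tendsto_ofReal
    have := (((tendsto_one_div_add_atTop_nhds_zero_nat (𝕜 := ℝ)).const_mul M).mul_const A).const_add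
      (tv n u)
    simpa using this

lemma ball_flux (n : ℕ) (hn : 2 ≤ n) (R : ℝ) (hR : 0 < R) (ψ : Euc n → Euc n)
    (hψ : ContDiff ℝ 1 ψ) (hψc : HasCompactSupport ψ) (hψ1 : ∀ x, ‖ψ x‖ ≤ 1) :
    ∫ x in Metric.closedBall (0 : Euc n) R, dv n ψ x ≤
      n * (volume (Metric.ball (0 : Euc n) 1)).toReal * R ^ (n - 1) := by
  have : Nontrivial (Euc n) := by
    have : Nonempty (Fin n) := ⟨⟨0, by lia⟩⟩
    infer_instance
  set ω := (volume (Metric.ball (0 : Euc n) 1)).toReal with hω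
  have hωf : volume (Metric.ball (0 : Euc n) 1) ≠ ∞ := measure_ball_lt_top.ne
  have hvol : ∀ r, 0 ≤ r → (volume (Metric.closedBall (0 : Euc n) r)).toReal = r ^ n * ω := by
    intro r hr
    rw [Measure.addHaar_closedBall _ _ hr, ENNReal.toReal_mul, ENNReal.toReal_ofReal (by positivity)]
    simp [hω]
  have hvol' : ∀ r, 0 ≤ r → (volume (Metric.ball (0 : Euc n) r)).toReal = r ^ n * ω := by
    intro r hr
    rw [Measure.addHaar_ball _ _ hr, ENNReal.toReal_mul, ENNReal.toReal_ofReal (by positivity)]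
    simp [hω]
  -- cutoff
  let Φ : ℝ → Euc n → ℝ := fun h x => max 0 (min 1 (1 - (‖x‖ - R) / h))
  have hΦL : ∀ h, 0 < h → LipschitzWith (Real.toNNReal (1 / h)) (Φ h) := by
    intro h hh
    have h1 : LipschitzWith (Real.toNNReal (1 / h)) (fun x : Euc n => 1 - (‖x‖ - R) / h) := by
      refine LipschitzWith.of_dist_le_mul fun x y => ?_
      rw [Real.coe_toNNReal _ (by positivity), Real.dist_eq, dist_eq_norm]
      have : 1 - (‖x‖ - R) / h - (1 - (‖y‖ - R) / h) = -(1 / h * (‖x‖ - ‖y‖)) := by ring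
      rw [this, abs_neg, abs_mul, abs_of_pos (by positivity)]
      gcongr
      exact abs_norm_sub_norm_le x y
    exact (h1.const_min 1).const_max 0
  have hΦd : ∀ h, 0 < h → ∀ x, ‖fderiv ℝ (Φ h) x (ψ x)‖ ≤
      (Metric.closedBall 0 (R + h) \ Metric.ball 0 R).indicator (fun _ => 1 / h) x := by
    intro h hh x
    by_cases hx : x ∈ Metric.closedBall (0 : Euc n) (R + h) \ Metric.ball 0 R
    · rw [Set.indicator_of_mem hx]
      refine (ContinuousLinearMap.le_opNorm _ _).trans ?_
      have h1 := norm_fderiv_le_of_lipschitz ℝ (hΦL h hh) (x₀ := x)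
      rw [Real.coe_toNNReal _ (by positivity)] at h1
      calc _ ≤ 1 / h * 1 := mul_le_mul h1 (hψ1 x) (norm_nonneg _) (by positivity)
        _ = _ := mul_one _
    · rw [Set.indicator_of_notMem hx]
      suffices hconst : ∃ c, Φ h =ᶠ[𝓝 x] fun _ => c by
        obtain ⟨c, hc⟩ := hconst
        rw [hc.fderiv_eq]; simp
      simp only [Set.mem_sdiff, Metric.mem_closedBall, dist_zero_right, Metric.mem_ball, not_and,
        not_not] at hx
      by_cases hx2 : ‖x‖ ≤ R + h
      · refine ⟨1, ?_⟩
        filter_upwards [continuous_norm.continuousAt.eventually_lt_const (hx hx2)] with y hy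
        have : (‖y‖ - R) / h ≤ 0 := div_nonpos_of_nonpos_of_nonneg (by linarith) hh.le
        simp only [Φ]
        rw [min_eq_left (by linarith), max_eq_right zero_le_one]
      · refine ⟨0, ?_⟩
        push Not at hx2
        filter_upwards [continuous_norm.continuousAt.eventually_const_lt hx2] with y hy
        have : 1 ≤ (‖y‖ - R) / h := by rw [le_div_iff₀ hh]; linarith
        simp only [Φ]
        rw [max_eq_left]
        exact (min_le_right _ _).trans (by linarith)
  have hann : ∀ h, 0 < h → (volume (Metric.closedBall (0 : Euc n) (R + h) \ Metric.ball 0 R)).toReal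
      = (R + h) ^ n * ω - R ^ n * ω := by
    intro h hh
    have := measureReal_sdiff (μ := volume) (s₁ := Metric.closedBall (0 : Euc n) (R + h))
      (s₂ := Metric.ball 0 R)
      ((Metric.ball_subset_closedBall).trans (Metric.closedBall_subset_closedBall (by linarith)))
      measurableSet_ball measure_closedBall_lt_top.ne
    simp only [Measure.real] at this
    rw [this, hvol _ (by positivity), hvol' _ hR.le]
  have bound : ∀ h, 0 < h → ∫ x, Φ h x * dv n ψ x ≤ ω * (h⁻¹ * ((R + h) ^ n - R ^ n)) := by
    intro h hh
    rw [ibp (hΦL h hh) hψ hψc]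
    have hms : MeasurableSet (Metric.closedBall (0 : Euc n) (R + h) \ Metric.ball 0 R) :=
      measurableSet_closedBall.diff measurableSet_ball
    have hmf : volume (Metric.closedBall (0 : Euc n) (R + h) \ Metric.ball 0 R) ≠ ∞ :=
      ((measure_mono Set.sdiff_subset).trans_lt measure_closedBall_lt_top).ne
    have hi : Integrable ((Metric.closedBall (0 : Euc n) (R + h) \ Metric.ball 0 R).indicator
        (fun _ => 1 / h)) :=
      (integrable_indicator_iff hms).2 (integrableOn_const hmf)
    have h1 := norm_integral_le_of_norm_le hi (.of_forall (hΦd h hh))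
    rw [integral_indicator hms, setIntegral_const, smul_eq_mul, Measure.real, hann h hh] at h1
    refine (neg_le_abs _).trans (h1.trans (le_of_eq ?_))
    ring
  -- limit
  have hh0 : Tendsto (fun k : ℕ => 1 / ((k : ℝ) + 1)) atTop (𝓝[>] 0) :=
    tendsto_nhdsWithin_iff.2 ⟨tendsto_one_div_add_atTop_nhds_zero_nat,
      .of_forall fun k => by simp only [Set.mem_Ioi]; positivity⟩
  have lim1 : Tendsto (fun k : ℕ => ω * ((1 / ((k : ℝ) + 1))⁻¹ * ((R + 1 / ((k : ℝ) + 1)) ^ n - R ^ n)))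
      atTop (𝓝 (ω * (n * R ^ (n - 1)))) := by
    have := ((hasDerivAt_pow n R).tendsto_slope_zero_right.comp hh0).const_mul ω
    simpa [Function.comp_def] using this
  have lim2 : Tendsto (fun k : ℕ => ∫ x, Φ (1 / ((k : ℝ) + 1)) x * dv n ψ x) atTop
      (𝓝 (∫ x, (Metric.closedBall (0 : Euc n) R).indicator (dv n ψ) x)) := by
    refine tendsto_integral_of_dominated_convergence (fun x => ‖dv n ψ x‖) ?_ ?_ ?_ ?_
    · intro k
      exact ((hΦL _ (by positivity)).continuous.mul (dv_cont hψ)).aestronglyMeasurable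
    · exact ((dv_cont hψ).integrable_of_hasCompactSupport (dv_cs hψc)).norm
    · intro k
      refine .of_forall fun x => ?_
      rw [norm_mul]
      refine mul_le_of_le_one_left (norm_nonneg _) ?_
      have h1 : 0 ≤ Φ (1 / ((k : ℝ) + 1)) x := le_max_left _ _
      rw [Real.norm_eq_abs, abs_of_nonneg h1]
      exact max_le zero_le_one (min_le_left _ _)
    · refine .of_forall fun x => ?_
      by_cases hx : x ∈ Metric.closedBall (0 : Euc n) R
      · rw [Set.indicator_of_mem hx]
        refine tendsto_const_nhds.congr fun k => ?_
        have hx' : ‖x‖ ≤ R := by simpa using hx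
        have : (‖x‖ - R) / (1 / ((k : ℝ) + 1)) ≤ 0 :=
          div_nonpos_of_nonpos_of_nonneg (by linarith) (by positivity)
        simp only [Φ]
        rw [min_eq_left (by linarith), max_eq_right zero_le_one, one_mul]
      · rw [Set.indicator_of_notMem hx]
        have hx' : R < ‖x‖ := by simpa using hx
        refine tendsto_const_nhds.congr' ?_
        have h2 := (tendsto_one_div_add_atTop_nhds_zero_nat (𝕜 := ℝ)).eventually_lt_const
          (sub_pos.2 hx')
        filter_upwards [h2] with k hk
        have : 1 ≤ (‖x‖ - R) / (1 / ((k : ℝ) + 1)) := by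
          rw [le_div_iff₀ (by positivity)]; linarith
        simp only [Φ]
        rw [max_eq_left, zero_mul]
        exact (min_le_right _ _).trans (by linarith)
  rw [integral_indicator measurableSet_closedBall] at lim2
  have := le_of_tendsto_of_tendsto' lim2 lim1 fun k => bound _ (by positivity)
  refine this.trans (le_of_eq ?_)
  ring



lemma h_formula (a b q P Q : ℝ) (ha : 0 < a) (hb : 0 < b) (hP : 0 < P) (hQ : 0 < Q)
    (h : P ^ a + Q ^ b = 1) :
    (1 + P ^ a / Q ^ b) ^ (q / a - 1 / b) /
      ((1 + P ^ a / Q ^ b) ^ (q / a) - (P ^ a / Q ^ b) ^ (q / a)) = Q / (1 - P ^ q) := by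
  have hPa : 0 < P ^ a := by positivity
  have hQb : 0 < Q ^ b := by positivity
  have e1 : 1 + P ^ a / Q ^ b = (Q ^ b)⁻¹ := by
    field_simp; linarith
  have e2 : (P ^ a / Q ^ b) ^ (q / a) = P ^ q * ((Q ^ b)⁻¹) ^ (q / a) := by
    rw [div_eq_mul_inv, Real.mul_rpow hPa.le (by positivity), ← Real.rpow_mul hP.le]
    congr 2; field_simp
  have e3 : ((Q ^ b)⁻¹) ^ (1 / b) = Q⁻¹ := by
    rw [Real.inv_rpow hQb.le, ← Real.rpow_mul hQ.le, mul_one_div_cancel hb.ne', Real.rpow_one]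
  have hz : 0 < ((Q ^ b)⁻¹) ^ (q / a) := by positivity
  rw [e1, e2, Real.rpow_sub (by positivity), e3, ← one_sub_mul]
  rw [div_inv_eq_mul, mul_comm (1 - P ^ q), mul_div_mul_left _ _ hz.ne']

lemma ball_exists (n : ℕ) (hn : 2 ≤ n) (κ : ℝ) (hκ : 0 < κ)
    (hvB : volume (Metric.ball (0 : Euc n) 1) = ENNReal.ofReal (κ ^ n)) (P Q : ℝ) (hP : 0 < P)
    (hQ : 0 < Q) : ∃ u : Euc n → ℝ, MemBV n u ∧ tv n u = P ∧ nrm1 n u = Q ∧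
      n * κ * nrmq n ((n : ℝ) / (n - 1)) u = P := by
  have hn' : (2 : ℝ) ≤ n := by exact_mod_cast hn
  have hn1 : (0 : ℝ) < n - 1 := by linarith
  have hn0 : (0 : ℝ) < n := by linarith
  set R := n * Q / P with hRd
  have hR : 0 < R := by positivity
  set c := Q / (κ ^ n * R ^ n) with hcd
  have hc : 0 < c := by positivity
  set B := Metric.closedBall (0 : Euc n) R with hB
  have hvol : volume B = ENNReal.ofReal ((κ * R) ^ n) := by
    rw [hB, Measure.addHaar_closedBall _ _ hR.le, hvB, ← ENNReal.ofReal_mul (by positivity), mul_pow,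
      mul_comm]
    simp
  have hBf : volume B ≠ ∞ := by rw [hvol]; simp
  have hBm : MeasurableSet B := measurableSet_closedBall
  set u : Euc n → ℝ := B.indicator fun _ => c with hu
  have hup : ∀ r ∈ TVSet n u, r ≤ P := by
    rintro r ⟨ψ, hψ, hψc, hψ1, rfl⟩
    change ∫ x, u x * dv n ψ x ≤ P
    have h1 := ball_flux n hn R hR ψ hψ hψc hψ1
    have e : ∫ x, u x * dv n ψ x = c * ∫ x in B, dv n ψ x := by
      rw [← integral_const_mul, ← integral_indicator hBm]
      congr 1
      ext x
      by_cases hx : x ∈ B <;> simp [hu, hx]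
    rw [e]
    refine (mul_le_mul_of_nonneg_left h1 hc.le).trans (le_of_eq ?_)
    rw [hvB, ENNReal.toReal_ofReal (by positivity)]
    have e2 : R ^ n = R ^ (n - 1) * R := by rw [← pow_succ]; congr 1; lia
    rw [hcd, e2, hRd]
    field_simp
  have hBV : MemBV n u :=
    ⟨(integrable_indicator_iff hBm).2 (integrableOn_const hBf), ⟨P, hup⟩⟩
  have htv : tv n u ≤ P := by
    refine csSup_le ⟨0, fun _ => 0, contDiff_const, ?_, by simp, by simp⟩ hup
    exact HasCompactSupport.zero
  have hq0 : (0 : ℝ) < n / (n - 1) := by positivity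
  have hnq : nrmq n ((n : ℝ) / (n - 1)) u = c * (κ * R) ^ (n - 1) := by
    rw [nrmq, hu, eLpNorm_indicator_const hBm (by simpa using hq0) (by simp),
      ENNReal.toReal_ofReal hq0.le, hvol, ENNReal.toReal_mul,
      ENNReal.ofReal_rpow_of_pos (by positivity), ENNReal.toReal_ofReal (by positivity)]
    congr 1
    · simp [hc.le]
    · rw [← Real.rpow_natCast, ← Real.rpow_mul (by positivity), ← Real.rpow_natCast,
        Nat.cast_sub (by lia)]
      congr 1
      push_cast
      field_simp
  have hPe : n * κ * nrmq n ((n : ℝ) / (n - 1)) u = P := by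
    rw [hnq, hcd, mul_pow]
    have e2 : R ^ n = R ^ (n - 1) * R := by rw [← pow_succ]; congr 1; lia
    have e3 : κ ^ n = κ ^ (n - 1) * κ := by rw [← pow_succ]; congr 1; lia
    rw [e2, e3]
    have : R * P = n * Q := by rw [hRd]; field_simp
    field_simp
    linarith
  refine ⟨u, hBV, le_antisymm htv ?_, ?_, hPe⟩
  · have h1 := sob_bv n hn κ hκ hvB u hBV
    have htv0 : 0 ≤ tv n u := by
      refine le_csSup hBV.2 ⟨fun _ => 0, contDiff_const, HasCompactSupport.zero, by simp, by simp⟩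
    have h2 := ENNReal.toReal_mono ENNReal.ofReal_ne_top h1
    rw [ENNReal.toReal_mul, ENNReal.toReal_ofReal (by positivity), ENNReal.toReal_ofReal htv0] at h2
    rw [← hPe]
    exact h2
  · rw [nrm1, hu, eLpNorm_indicator_const hBm (by simp) (by simp), hvol]
    simp [hc.le, mul_pow, ENNReal.toReal_ofReal, hκ.le, hR.le]
    rw [abs_of_pos hc, hcd]
    field_simp

lemma alphac_aux (n : ℕ) (hn : 2 ≤ n) (a b : ℝ) (ha : 0 < a) (hb : 0 < b) (q E : ℝ)
    (hq : q = (n : ℝ) / (n - 1))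
    (hE : E = (1 / ((n : ℝ) ^ (n - 1) * omegaS n)) ^ (1 / ((n : ℝ) - 1))) :
    (sSup { r | ∃ u : Euc n → ℝ, MemBV n u ∧ tv n u ^ a + nrm1 n u ^ b = 1 ∧
        r = nrm1 n u / (E - nrmq n q u ^ q) } =
    (1 / E) * sSup { r | ∃ t : ℝ, 0 < t ∧
        r = (1+t) ^ (q/a - 1/b) / ((1+t) ^ (q/a) - t ^ (q/a)) })
    ∧ ∀ u : Euc n → ℝ, MemBV n u → tv n u ^ a + nrm1 n u ^ b = 1 →
        E * (1 - tv n u ^ q) ≤ E - nrmq n q u ^ q ∧ 0 < E * (1 - tv n u ^ q) := by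
  have hn' : (2 : ℝ) ≤ n := by exact_mod_cast hn
  have hn1 : (0 : ℝ) < n - 1 := by linarith
  have hn0 : (0 : ℝ) < n := by linarith
  have hq0 : 0 < q := by rw [hq]; positivity
  set ω := (volume (Metric.ball (0 : Euc n) 1)).toReal with hω
  have hωf : volume (Metric.ball (0 : Euc n) 1) ≠ ∞ := measure_ball_lt_top.ne
  have hω0 : 0 < ω := ENNReal.toReal_pos (Metric.measure_ball_pos _ _ one_pos).ne' hωf
  set κ := ω ^ ((1 : ℝ) / n) with hκd
  have hκ : 0 < κ := by positivity
  have hκn : κ ^ n = ω := by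
    rw [hκd, ← Real.rpow_natCast, ← Real.rpow_mul hω0.le, one_div, inv_mul_cancel₀ hn0.ne',
      Real.rpow_one]
  have hvB : volume (Metric.ball (0 : Euc n) 1) = ENNReal.ofReal (κ ^ n) := by
    rw [hκn, hω, ENNReal.ofReal_toReal hωf]
  have hnκ : 0 < n * κ := by positivity
  have hEe : E * (n * κ) ^ q = 1 := by
    have e1 : (n : ℝ) ^ (n - 1) * omegaS n = (n * κ) ^ n := by
      rw [omegaS, ← hω, ← hκn, ← mul_assoc, ← pow_succ, mul_pow]
      congr 2; lia
    rw [hE, e1, one_div, Real.inv_rpow (by positivity), ← Real.rpow_natCast,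
      ← Real.rpow_mul hnκ.le, hq, mul_one_div]
    exact inv_mul_cancel₀ (by positivity)
  have hE0 : 0 < E := by
    by_contra h
    have : 0 < (n * κ) ^ q := by positivity
    nlinarith
  have tv0 : ∀ u : Euc n → ℝ, MemBV n u → 0 ≤ tv n u := fun u hu =>
    le_csSup hu.2 ⟨fun _ => 0, contDiff_const, HasCompactSupport.zero, by simp, by simp⟩
  have nrm0 : ∀ u : Euc n → ℝ, 0 ≤ nrm1 n u := fun u => ENNReal.toReal_nonneg
  have sob : ∀ u : Euc n → ℝ, MemBV n u → nrmq n q u ^ q ≤ E * tv n u ^ q := by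
    intro u hu
    have h1 := ENNReal.toReal_mono ENNReal.ofReal_ne_top (sob_bv n hn κ hκ hvB u hu)
    rw [ENNReal.toReal_mul, ENNReal.toReal_ofReal (by positivity),
      ENNReal.toReal_ofReal (tv0 u hu), ← hq] at h1
    change n * κ * nrmq n q u ≤ tv n u at h1
    have hnn : 0 ≤ nrmq n q u := ENNReal.toReal_nonneg
    have h2 := Real.rpow_le_rpow (by positivity) h1 hq0.le
    rw [Real.mul_rpow hnκ.le hnn] at h2
    calc nrmq n q u ^ q = E * ((n * κ) ^ q * nrmq n q u ^ q) := by
          rw [← mul_assoc, hEe, one_mul]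
      _ ≤ _ := by gcongr
  have pos : ∀ u : Euc n → ℝ, MemBV n u → tv n u ^ a + nrm1 n u ^ b = 1 →
      0 < tv n u ∧ 0 < nrm1 n u ∧ tv n u < 1 := by
    intro u hu hc
    have hz : nrm1 n u = 0 → tv n u = 0 := by
      intro h
      have h1 : eLpNorm u 1 volume = 0 := by
        rcases (ENNReal.toReal_eq_zero_iff _).1 h with h | h
        · exact h
        · exact absurd h (memLp_one_iff_integrable.2 hu.1).eLpNorm_ne_top
      rw [eLpNorm_eq_zero_iff hu.1.1 one_ne_zero] at h1
      refine le_antisymm (csSup_le ⟨0, fun _ => 0, contDiff_const, HasCompactSupport.zero,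
        by simp, by simp⟩ ?_) (tv0 u hu)
      rintro r ⟨ψ, -, -, -, rfl⟩
      apply le_of_eq
      apply integral_eq_zero_of_ae
      filter_upwards [h1] with x hx
      simp [hx]
    have hz' : tv n u = 0 → nrm1 n u = 0 := by
      intro h
      have h1 := sob_bv n hn κ hκ hvB u hu
      rw [h, ENNReal.ofReal_zero, nonpos_iff_eq_zero, mul_eq_zero] at h1
      rcases h1 with h1 | h1
      · exact absurd h1 (ENNReal.ofReal_pos.2 hnκ).ne'
      · rw [eLpNorm_eq_zero_iff hu.1.1 (by rw [← hq]; simpa using hq0)] at h1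
        rw [nrm1, eLpNorm_congr_ae h1]
        simp
    have hne : nrm1 n u ≠ 0 := by
      intro h
      rw [h, hz h, Real.zero_rpow ha.ne', Real.zero_rpow hb.ne'] at hc
      norm_num at hc
    have hQ : 0 < nrm1 n u := lt_of_le_of_ne (nrm0 u) hne.symm
    have hP : 0 < tv n u := lt_of_le_of_ne (tv0 u hu) fun h => hne (hz' h.symm)
    refine ⟨hP, hQ, ?_⟩
    by_contra h
    have h1 := Real.one_le_rpow (not_lt.1 h) ha.le
    have h2 : 0 < nrm1 n u ^ b := by positivity
    linarith
  have second : ∀ u : Euc n → ℝ, MemBV n u → tv n u ^ a + nrm1 n u ^ b = 1 →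
        E * (1 - tv n u ^ q) ≤ E - nrmq n q u ^ q ∧ 0 < E * (1 - tv n u ^ q) := by
    intro u hu hc
    obtain ⟨hP, hQ, h1⟩ := pos u hu hc
    have := sob u hu
    have h2 := Real.rpow_lt_one hP.le h1 hq0
    exact ⟨by linarith, mul_pos hE0 (by linarith)⟩
  refine ⟨?_, second⟩
  set S1 := { r | ∃ u : Euc n → ℝ, MemBV n u ∧ tv n u ^ a + nrm1 n u ^ b = 1 ∧
        r = nrm1 n u / (E - nrmq n q u ^ q) } with hS1
  set S2 := { r | ∃ t : ℝ, 0 < t ∧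
        r = (1+t) ^ (q/a - 1/b) / ((1+t) ^ (q/a) - t ^ (q/a)) } with hS2
  have i : ∀ r ∈ S2, 1 / E * r ∈ S1 := by
    rintro r ⟨t, ht, rfl⟩
    have h1t : 0 < 1 + t := by positivity
    set P := (t / (1 + t)) ^ (1 / a) with hPd
    set Q := (1 / (1 + t)) ^ (1 / b) with hQd
    have hP : 0 < P := by positivity
    have hQ : 0 < Q := by positivity
    have hPa : P ^ a = t / (1 + t) := by
      rw [hPd, ← Real.rpow_mul (by positivity), one_div_mul_cancel ha.ne', Real.rpow_one]
    have hQb : Q ^ b = 1 / (1 + t) := by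
      rw [hQd, ← Real.rpow_mul (by positivity), one_div_mul_cancel hb.ne', Real.rpow_one]
    have hsum : P ^ a + Q ^ b = 1 := by rw [hPa, hQb]; field_simp; ring
    have ht' : P ^ a / Q ^ b = t := by rw [hPa, hQb]; field_simp
    have hf := h_formula a b q P Q ha hb hP hQ hsum
    rw [ht'] at hf
    obtain ⟨u, hu, h1, h2, h3⟩ := ball_exists n hn κ hκ hvB P Q hP hQ
    refine ⟨u, hu, by rw [h1, h2]; exact hsum, ?_⟩
    rw [hf, h2]
    have h4 : nrmq n q u ^ q = E * P ^ q := by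
      rw [← hq] at h3
      have hnn : 0 ≤ nrmq n q u := ENNReal.toReal_nonneg
      rw [← h3, Real.mul_rpow hnκ.le hnn, ← mul_assoc, hEe, one_mul]
    rw [h4, ← mul_one_sub, div_mul_div_comm, one_mul]
  have ii : ∀ r ∈ S1, ∃ r' ∈ S2, r ≤ 1 / E * r' := by
    rintro r ⟨u, hu, hc, rfl⟩
    obtain ⟨hP, hQ, h1⟩ := pos u hu hc
    obtain ⟨h2, h3⟩ := second u hu hc
    refine ⟨_, ⟨tv n u ^ a / nrm1 n u ^ b, by positivity, rfl⟩, ?_⟩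
    rw [h_formula a b q _ _ ha hb hP hQ hc, div_mul_div_comm, one_mul]
    exact div_le_div_of_nonneg_left hQ.le h3 h2
  have hne2 : S2.Nonempty := ⟨_, 1, one_pos, rfl⟩
  have hne1 : S1.Nonempty := ⟨_, i _ hne2.some_mem⟩
  by_cases hb2 : BddAbove S2
  · have hle : ∀ r ∈ S1, r ≤ 1 / E * sSup S2 := by
      intro r hr
      obtain ⟨r', hr', h⟩ := ii r hr
      exact h.trans (mul_le_mul_of_nonneg_left (le_csSup hb2 hr') (by positivity))
    have hb1 : BddAbove S1 := ⟨_, hle⟩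
    refine le_antisymm (csSup_le hne1 hle) ?_
    rw [one_div, inv_mul_le_iff₀ hE0]
    refine csSup_le hne2 fun r hr => ?_
    have := le_csSup hb1 (i r hr)
    rwa [one_div, inv_mul_le_iff₀ hE0] at this
  · have hb1 : ¬ BddAbove S1 := by
      rintro ⟨M, hM⟩
      refine hb2 ⟨E * M, fun r hr => ?_⟩
      have := hM (i r hr)
      rwa [one_div, inv_mul_le_iff₀ hE0] at this
    rw [Real.sSup_of_not_bddAbove hb1, Real.sSup_of_not_bddAbove hb2, mul_zero]


end Helpers

/-- `α_c = (1/E) sup_{t>0} h(t)`, and on the constraint set the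
denominator `E - ‖u‖_{1*}^{1*}` is bounded below by `E(1-‖u‖_{TV}^{1*}) > 0`. -/
theorem alphac_eq_sup_h (N : ℕ) (hN : 2 ≤ N) (a b : ℝ) (ha : 0 < a) (hb : 0 < b) :
    (sSup { r | ∃ u : Euc N → ℝ, MemBV N u ∧ tv N u ^ a + nrm1 N u ^ b = 1 ∧
        r = nrm1 N u /
          ((1 / ((N : ℝ) ^ (N - 1) * omegaS N)) ^ (1/((N:ℝ)-1)) -
            nrmq N ((N:ℝ)/((N:ℝ)-1)) u ^ ((N:ℝ)/((N:ℝ)-1))) } =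
    (1 / (1 / ((N : ℝ) ^ (N - 1) * omegaS N)) ^ (1/((N:ℝ)-1))) *
      sSup { r | ∃ t : ℝ, 0 < t ∧
        r = (1+t) ^ (((N:ℝ)/((N:ℝ)-1))/a - 1/b) /
              ((1+t) ^ (((N:ℝ)/((N:ℝ)-1))/a) - t ^ (((N:ℝ)/((N:ℝ)-1))/a)) })
    ∧ ∀ u : Euc N → ℝ, MemBV N u → tv N u ^ a + nrm1 N u ^ b = 1 →
        (1 / ((N : ℝ) ^ (N - 1) * omegaS N)) ^ (1/((N:ℝ)-1)) *
            (1 - tv N u ^ ((N:ℝ)/((N:ℝ)-1))) ≤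
          (1 / ((N : ℝ) ^ (N - 1) * omegaS N)) ^ (1/((N:ℝ)-1)) -
            nrmq N ((N:ℝ)/((N:ℝ)-1)) u ^ ((N:ℝ)/((N:ℝ)-1)) ∧
        0 < (1 / ((N : ℝ) ^ (N - 1) * omegaS N)) ^ (1/((N:ℝ)-1)) *
            (1 - tv N u ^ ((N:ℝ)/((N:ℝ)-1))) := by
  exact alphac_aux N hN a b ha hb _ _ rfl rfl
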